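/- arXiv:2008.12651 — 4 statements merged into one kernel-verified Lean document; each statement's English description precedes it below -/
import Mathlib

section
/- Let F be a finite field and B ∈ M_n(F) an invertible alternating matrix, and let 𝒞(B) = {g ∈ M_n(F) : g invertible, g·B·gᵀ = B} be the corresponding symplectic group. Let X₁, X₂ ∈ 𝒞(B) be semisimple. Then X₁ and X₂ are conjugate by an element of 𝒞(B) if and only if X₁ and X₂ are similar (conjugate in GL(n,F)). -/
open Matrix

/-!
In operator language the claim is that two symplectic forms `ω` and `ω'` preserved by a semisimple
operator `X` differ by an operator commuting with `X`. Write `ω' x y = ω (A x) y`; then `A` is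
invertible, self-adjoint for `ω` and commutes with `X`, and we want `A = star h * h` with `h`
commuting with `X`, where `star` is the adjoint for `ω`.

If `X` has no eigenvalue `±1`, then `X - star X` is a unit, because `star X = X⁻¹`. Now `X` and `A`
generate a finite commutative ring with involution; there Hilbert 90 holds because `X - star X` is
a unit, and comparing the orders of the kernels and images of `u ↦ u * star u` and
`u ↦ u / star u` shows that every self-adjoint unit is a norm.

The eigenspaces for `±1` split off orthogonally for both forms. On them `X` is a scalar, so any
isometry commutes with it, and symplectic forms of equal dimension are isometric.
-/

/-! ### Norms in finite rings with involution -/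

theorem exists_pow_isIdempotentElem {M : Type*} [Monoid M] [Finite M] (a : M) :
    ∃ k ≠ 0, IsIdempotentElem (a ^ k) := by
  let _ : TopologicalSpace M := ⊥
  have : DiscreteTopology M := ⟨rfl⟩
  obtain ⟨_, ⟨k, hk, rfl⟩, idem⟩ := exists_idempotent_in_compact_subsemigroup
    (fun _ : M => continuous_of_discreteTopology) {m : M | ∃ k ≠ 0, a ^ k = m}
    ⟨a, 1, one_ne_zero, pow_one a⟩ (Set.toFinite _).isCompact (by
      rintro _ ⟨k, hk, rfl⟩ _ ⟨l, -, rfl⟩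
      exact ⟨k + l, by simp [hk], pow_add a k l⟩)
  exact ⟨k, hk, idem⟩

theorem isUnit_add_one_sub_mul {R : Type*} [CommRing R] {a b e : R} {k : ℕ}
    (he : IsIdempotentElem e) (hae : a ∣ e) (hea : e ∣ a ^ k) (hab : IsCoprime a b) :
    IsUnit (a + (1 - e) * b) := by
  have compl : IsCoprime a (1 - e) :=
    IsCoprime.of_isCoprime_of_dvd_left ⟨1, 1, by ring⟩ hae
  have coprime_one_sub : IsCoprime (a + (1 - e) * b) (1 - e) := compl.add_mul_left_left b
  have coprime_a : IsCoprime (a + (1 - e) * b) a := by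
    simpa only [add_comm, mul_one] using (compl.mul_right hab).symm.add_mul_left_left 1
  have coprime_e : IsCoprime (a + (1 - e) * b) e :=
    coprime_a.pow_right.of_isCoprime_of_dvd_right hea
  have coprime_zero := coprime_e.mul_right coprime_one_sub
  rwa [he.mul_one_sub_self, isCoprime_zero_right] at coprime_zero

theorem exists_isUnit_eq_mul_star {E : Type*} [CommRing E] [Finite E] [StarRing E] {x h : E}
    (hx : IsUnit (x - star x)) (hh : h * star h = 1) : ∃ y, IsUnit y ∧ y = h * star y := by
  -- Both `1 + h` and `x + h * star x` satisfy the equation and they are coprime, so gluing them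
  -- along a star-invariant idempotent that splits off the nilpotent part of `1 + h` gives a unit.
  obtain ⟨k, hk, idem⟩ := exists_pow_isIdempotentElem ((1 + h) * star (1 + h))
  set e := ((1 + h) * star (1 + h)) ^ k with e_def
  have star_e : star e = e := by
    rw [e_def, star_pow, star_mul, star_star]
  have dvd_e : 1 + h ∣ e := (dvd_mul_right _ _).trans (dvd_pow_self _ hk)
  have e_dvd : e ∣ (1 + h) ^ (2 * k) := by
    rw [pow_mul]
    refine pow_dvd_pow_of_dvd ⟨h, ?_⟩ k
    rw [star_add, star_one]
    linear_combination (-1 - h) * hh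
  have coprime : IsCoprime (1 + h) (x + h * star x) := by
    obtain ⟨u, hu⟩ := hx.exists_left_inv
    exact ⟨-u * star x, u, by linear_combination hu⟩
  refine ⟨_, isUnit_add_one_sub_mul idem dvd_e e_dvd coprime, ?_⟩
  simp only [star_add, star_mul, star_sub, star_one, star_star, star_e]
  linear_combination (-1 - (1 - e) * x) * hh

theorem range_eq_ker_of_ker_le_range {G : Type*} [Group G] [Finite G] {f g : G →* G}
    (range_le : f.range ≤ g.ker) (ker_le : f.ker ≤ g.range) : f.range = g.ker := by
  refine Subgroup.eq_of_le_of_card_ge range_le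
    (Nat.le_of_mul_le_mul_right ?_ (Nat.card_pos (α := g.range)))
  calc Nat.card g.ker * Nat.card g.range
      = Nat.card f.ker * Nat.card f.range := by
        simp only [← Subgroup.index_ker, Subgroup.card_mul_index]
    _ ≤ Nat.card f.range * Nat.card g.range := by
        rw [mul_comm]
        exact Nat.mul_le_mul_left _ (Subgroup.card_le_of_le ker_le)

theorem exists_mul_star_eq {E : Type*} [CommRing E] [Finite E] [StarRing E] {x a : E}
    (hx : IsUnit (x - star x)) (ha : IsUnit a) (hsa : IsSelfAdjoint a) :
    ∃ h, h * star h = a := by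
  let norm : Eˣ →* Eˣ := MonoidHom.id Eˣ * (starMulAut : MulAut Eˣ).toMonoidHom
  let quot : Eˣ →* Eˣ := MonoidHom.id Eˣ / (starMulAut : MulAut Eˣ).toMonoidHom
  have norm_apply (u : Eˣ) : norm u = u * star u := rfl
  have quot_apply (u : Eˣ) : quot u = u / star u := rfl
  have mem_ker_quot (u : Eˣ) : u ∈ quot.ker ↔ u = star u := by
    rw [MonoidHom.mem_ker, quot_apply, div_eq_one]
  have range_le : norm.range ≤ quot.ker := by
    rintro _ ⟨u, rfl⟩
    rw [mem_ker_quot, norm_apply, star_mul, star_star]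
  have ker_le : norm.ker ≤ quot.range := by
    intro u hu
    obtain ⟨_, ⟨y, rfl⟩, hy⟩ := exists_isUnit_eq_mul_star hx (Units.ext_iff.1 hu)
    exact ⟨y, (div_eq_iff_eq_mul.2 (Units.ext hy) : y / star y = u)⟩
  obtain ⟨a, rfl⟩ := ha
  obtain ⟨u, hu⟩ : a ∈ norm.range := by
    rw [range_eq_ker_of_ker_le_range range_le ker_le, mem_ker_quot]
    exact Units.ext hsa.star_eq.symm
  exact ⟨u, congrArg Units.val hu⟩

theorem isUnit_of_isUnit_coe {R E : Type*} [Monoid R] [SetLike E R] [SubmonoidClass E R] {S : E}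
    [Finite S] {u : S} (hu : IsUnit (u : R)) : IsUnit u :=
  IsLeftRegular.isUnit_of_finite fun _ _ h =>
    Subtype.ext (hu.mul_left_cancel (congrArg Subtype.val h))

open scoped IsMulCommutative in
theorem exists_commute_star_mul_eq {R : Type*} [Ring R] [Finite R] [StarRing R] {x a : R}
    [IsStarNormal x] (hx : IsUnit (x - star x)) (ha : IsUnit a) (hsa : IsSelfAdjoint a)
    (hax : Commute a x) : ∃ h, Commute h x ∧ star h * h = a := by
  have star_a : star a = a := hsa
  have hax' : Commute a (star x) := by simpa only [star_a] using hax.star_star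
  have hxx : Commute (star x) x := star_comm_self
  let E := StarAlgebra.adjoin ℤ {x, a}
  have : IsMulCommutative E := StarAlgebra.isMulCommutative_adjoin ℤ
    (by
      rintro _ (rfl | rfl) _ (rfl | rfl)
      exacts [rfl, hax.eq.symm, hax.eq, rfl])
    (by
      rintro _ (rfl | rfl) _ (rfl | rfl)
      exacts [hxx.eq.symm, by rw [star_a, hax.eq], hax'.eq, by rw [star_a]])
  let x' : E := ⟨x, StarAlgebra.subset_adjoin ℤ _ (by simp)⟩
  let a' : E := ⟨a, StarAlgebra.subset_adjoin ℤ _ (by simp)⟩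
  obtain ⟨h, hh⟩ := exists_mul_star_eq (x := x') (a := a')
    (isUnit_of_isUnit_coe hx) (isUnit_of_isUnit_coe ha) (Subtype.ext hsa)
  exact ⟨h, congrArg Subtype.val (mul_comm h x'),
    congrArg Subtype.val ((mul_comm _ _).trans hh)⟩

/-! ### Symplectic forms -/

section CommRing

variable {R M M' : Type*} [CommRing R] [AddCommGroup M] [Module R M]
  [AddCommGroup M'] [Module R M']

/-- A symplectic form: a bilinear form that is alternating and nondegenerate. -/
structure IsSymplectic (ω : LinearMap.BilinForm R M) : Prop where
  isAlt : ω.IsAlt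
  nondegenerate : ω.Nondegenerate

/-- `ω'` is a pullback of `ω` along an endomorphism in the centralizer of `X`. For two symplectic
forms preserved by `X` this says that an isometry between them can be chosen to commute
with `X`. -/
def IsCentralizerPullback (X : Module.End R M) (ω ω' : LinearMap.BilinForm R M) : Prop :=
  ∃ h : Module.End R M, Commute h X ∧ ω.comp h h = ω'

variable {ω ω' : LinearMap.BilinForm R M} {W U : Submodule R M}

theorem comp_ofIsCompl {ω' : LinearMap.BilinForm R M'} (hω : ω.IsRefl) (hω' : ω'.IsRefl)
    (hWU : IsCompl W U) (ortho : U ≤ ω.orthogonal W) {f : W →ₗ[R] M'} {g : U →ₗ[R] M'}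
    (hf : ω'.comp f f = ω.restrict W) (hg : ω'.comp g g = ω.restrict U)
    (hfg : ∀ x y, ω' (f x) (g y) = 0) :
    ω'.comp (LinearMap.ofIsCompl hWU f g) (LinearMap.ofIsCompl hWU f g) = ω := by
  have apply_W (x y : W) : ω' (f x) (f y) = ω x y := LinearMap.congr_fun₂ hf x y
  have apply_U (x y : U) : ω' (g x) (g y) = ω x y := LinearMap.congr_fun₂ hg x y
  have apply_WU (x : W) (y : U) : ω x y = 0 := ortho y.2 x x.2
  have apply_UW (x : U) (y : W) : ω x y = 0 := hω _ _ (apply_WU y x)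
  have hgf (x : U) (y : W) : ω' (g x) (f y) = 0 := hω' _ _ (hfg y x)
  refine LinearMap.ext₂ fun x y => ?_
  obtain ⟨x₁, x₂, rfl, -⟩ := Submodule.existsUnique_add_of_isCompl hWU x
  obtain ⟨y₁, y₂, rfl, -⟩ := Submodule.existsUnique_add_of_isCompl hWU y
  simp [apply_W, apply_U, apply_WU, apply_UW, hfg, hgf]

theorem IsCentralizerPullback.of_isCompl {X : Module.End R M} (hω : ω.IsRefl)
    (hω' : ω'.IsRefl) (hWU : IsCompl W U) (ortho : U ≤ ω.orthogonal W)
    (ortho' : U ≤ ω'.orthogonal W)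
    {hW : ∀ x ∈ W, X x ∈ W} {hU : ∀ x ∈ U, X x ∈ U}
    (onW : IsCentralizerPullback (X.restrict hW) (ω.restrict W) (ω'.restrict W))
    (onU : IsCentralizerPullback (X.restrict hU) (ω.restrict U) (ω'.restrict U)) :
    IsCentralizerPullback X ω ω' := by
  obtain ⟨f, hfX, hf⟩ := onW
  obtain ⟨g, hgX, hg⟩ := onU
  refine ⟨LinearMap.ofIsCompl hWU (W.subtype ∘ₗ f) (U.subtype ∘ₗ g), ?_,
    comp_ofIsCompl hω' hω hWU ortho' hf hg fun x y => ortho (g y).2 _ (f x).2⟩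
  have commute_W (x : W) : (f (X.restrict hW x) : M) = X (f x) :=
    congrArg Subtype.val (LinearMap.congr_fun hfX.eq x)
  have commute_U (x : U) : (g (X.restrict hU x) : M) = X (g x) :=
    congrArg Subtype.val (LinearMap.congr_fun hgX.eq x)
  refine LinearMap.ext fun x => ?_
  obtain ⟨x₁, x₂, rfl, -⟩ := Submodule.existsUnique_add_of_isCompl hWU x
  have X_W : X x₁ = (X.restrict hW x₁ : W) := rfl
  have X_U : X x₂ = (X.restrict hU x₂ : U) := rfl
  simp only [Module.End.mul_apply, map_add, X_W, X_U, LinearMap.ofIsCompl_apply_left,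
    LinearMap.ofIsCompl_apply_right, LinearMap.comp_apply, Submodule.subtype_apply, commute_W,
    commute_U]

namespace IsSymplectic

theorem restrict_left (hω : IsSymplectic ω) (hWU : Codisjoint W U) (ortho : U ≤ ω.orthogonal W) :
    IsSymplectic (ω.restrict W) := by
  have isAlt : (ω.restrict W).IsAlt := fun x => hω.isAlt x
  refine ⟨isAlt, isAlt.isRefl.nondegenerate_iff_separatingLeft.2 ?_⟩
  rw [LinearMap.separatingLeft_iff_ker_eq_bot, LinearMap.BilinForm.ker_restrict_eq_of_codisjoint hWU
    fun x hx y hy => ortho hy x hx, hω.nondegenerate.ker_eq_bot]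
  exact W.ker_subtype

theorem restrict_right (hω : IsSymplectic ω) (hWU : Codisjoint W U) (ortho : U ≤ ω.orthogonal W) :
    IsSymplectic (ω.restrict U) :=
  hω.restrict_left hWU.symm fun x hx _ hy => hω.isAlt.isRefl _ _ (ortho hy x hx)

theorem comp_of_bijective (hω : IsSymplectic ω) {P : M' →ₗ[R] M} (hP : Function.Bijective P) :
    IsSymplectic (ω.comp P P) := by
  have isAlt : (ω.comp P P).IsAlt := fun x => hω.isAlt (P x)
  refine ⟨isAlt, isAlt.isRefl.nondegenerate_iff_separatingLeft.2 fun x hx => hP.injective ?_⟩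
  rw [map_zero]
  refine hω.nondegenerate.1 _ fun z => ?_
  obtain ⟨y, rfl⟩ := hP.surjective z
  exact hx y

end IsSymplectic

theorem apply_smul_add_smul_of_isAlt (hω : ω.IsAlt) {v w : M} (hvw : ω v w = 1) (a b c d : R) :
    ω (a • v + b • w) (c • v + d • w) = a * d - b * c := by
  have hwv : ω w v = -1 := by rw [← hω.neg_eq, hvw]
  simp only [map_add, map_smul, LinearMap.add_apply, LinearMap.smul_apply, hω.self_eq_zero, hvw,
    hwv, smul_eq_mul]
  ring

theorem disjoint_span_pair_orthogonal (hω : ω.IsAlt) {v w : M} (hvw : ω v w = 1) :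
    Disjoint (Submodule.span R {v, w}) (ω.orthogonal (Submodule.span R {v, w})) := by
  rw [Submodule.disjoint_def]
  intro x hx ortho
  obtain ⟨a, b, rfl⟩ := Submodule.mem_span_pair.1 hx
  have apply_v : ω v (a • v + b • w) = 0 := ortho v (Submodule.mem_span_pair.2 ⟨1, 0, by simp⟩)
  have apply_w : ω w (a • v + b • w) = 0 := ortho w (Submodule.mem_span_pair.2 ⟨0, 1, by simp⟩)
  have hb : b = 0 := by simpa [hω.self_eq_zero, hvw] using apply_v
  have ha : a = 0 := by simpa [hω.self_eq_zero, ← hω.neg_eq v w, hvw] using apply_w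
  rw [ha, hb, zero_smul, zero_smul, add_zero]

theorem linearIndependent_pair_of_isAlt (hω : ω.IsAlt) {v w : M} (hvw : ω v w = 1) :
    LinearIndependent R ![v, w] := by
  rw [LinearIndependent.pair_iff]
  intro a b h
  have ha := apply_smul_add_smul_of_isAlt hω hvw a b 0 1
  have hb := apply_smul_add_smul_of_isAlt hω hvw a b 1 0
  rw [h, map_zero, LinearMap.zero_apply] at ha hb
  constructor
  · linear_combination -ha
  · linear_combination hb

theorem exists_isometry_span_pair {ω' : LinearMap.BilinForm R M'} (hω : ω.IsAlt) (hω' : ω'.IsAlt)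
    {v w : M} {v' w' : M'} (hvw : ω v w = 1) (hvw' : ω' v' w' = 1) :
    ∃ f : Submodule.span R {v, w} →ₗ[R] M',
      ω'.comp f f = ω.restrict _ ∧ ∀ x, f x ∈ Submodule.span R {v', w'} := by
  let f : M →ₗ[R] M' := (-ω w).smulRight v' + (ω v).smulRight w'
  have f_apply (a b : R) : f (a • v + b • w) = a • v' + b • w' := by
    simp [f, hω.self_eq_zero, ← hω.neg_eq v w, hvw]
  refine ⟨f.domRestrict _, LinearMap.ext₂ ?_, ?_⟩
  · rintro ⟨x, hx⟩ ⟨y, hy⟩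
    obtain ⟨a, b, rfl⟩ := Submodule.mem_span_pair.1 hx
    obtain ⟨c, d, rfl⟩ := Submodule.mem_span_pair.1 hy
    simp only [LinearMap.BilinForm.comp_apply, LinearMap.domRestrict_apply, f_apply,
      LinearMap.BilinForm.restrict_apply, apply_smul_add_smul_of_isAlt hω hvw,
      apply_smul_add_smul_of_isAlt hω' hvw']
  · rintro ⟨x, hx⟩
    obtain ⟨a, b, rfl⟩ := Submodule.mem_span_pair.1 hx
    exact Submodule.mem_span_pair.2 ⟨a, b, (f_apply a b).symm⟩

theorem isAdjointPair_swap_of_isAlt (hω : ω.IsAlt) {S T : Module.End R M}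
    (h : LinearMap.IsAdjointPair ω ω S T) : LinearMap.IsAdjointPair ω ω T S := fun x y => by
  rw [← hω.neg_eq, ← h, hω.neg_eq]

theorem injective_of_isOrthogonal (hω : ω.Nondegenerate) {X : Module.End R M}
    (orth : ω.IsOrthogonal X) : Function.Injective X := by
  rw [← LinearMap.ker_eq_bot, LinearMap.ker_eq_bot']
  exact fun x hx => hω.1 x fun y => by rw [← orth, hx, map_zero, LinearMap.zero_apply]

theorem commute_of_isOrthogonal (hω : ω.Nondegenerate) {A X : Module.End R M}
    (hX : Function.Surjective X) (orth : ω.IsOrthogonal X)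
    (orth' : ω'.IsOrthogonal X) (apply_A : ∀ x y, ω (A x) y = ω' x y) : Commute A X := by
  refine LinearMap.ext fun x => LinearMap.ker_eq_bot.1 hω.ker_eq_bot (LinearMap.ext fun z => ?_)
  obtain ⟨y, rfl⟩ := hX z
  rw [Module.End.mul_apply, Module.End.mul_apply, apply_A, orth', ← apply_A, orth]

theorem injective_sub_of_mul_eq_one {X Y : Module.End R M} (hXY : X * Y = 1)
    (hX : ∀ c : R, c ^ 2 = 1 → X.eigenspace c = ⊥) : Function.Injective (X - Y) := by
  have eq_zero {c : R} (hc : c ^ 2 = 1) {v : M} (hv : X v = c • v) : v = 0 :=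
    (Submodule.eq_bot_iff _).1 (hX c hc) v (Module.End.mem_eigenspace_iff.2 hv)
  rw [← LinearMap.ker_eq_bot, LinearMap.ker_eq_bot']
  intro v hv
  have sq_apply : X (X v) = v := by
    rw [sub_eq_zero.1 hv, ← Module.End.mul_apply, hXY, Module.End.one_apply]
  have sub_self_eq_zero : X v - v = 0 := eq_zero (c := -1) (by norm_num) <| by
    rw [map_sub, sq_apply, neg_one_smul, neg_sub]
  exact eq_zero (c := 1) (by norm_num) (by rw [one_smul, sub_eq_zero.1 sub_self_eq_zero])

theorem range_sub_le_orthogonal_eigenspace {X : Module.End R M} (orth : ω.IsOrthogonal X) {c : R}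
    (hc : c ^ 2 = 1) : (X - c • 1).range ≤ ω.orthogonal (X.eigenspace c) := by
  rintro _ ⟨y, rfl⟩ x hx
  have apply_X : ω x y = c * ω x (X y) := by
    rw [← orth x y, Module.End.mem_eigenspace_iff.1 hx, map_smul, LinearMap.smul_apply,
      smul_eq_mul]
  calc ω x ((X - c • 1) y) = ω x (X y) - c * ω x y := by simp
    _ = 0 := by rw [apply_X]; linear_combination (-ω x (X y)) * hc

theorem apply_mem_range_sub (X : Module.End R M) (c : R) :
    ∀ x ∈ (X - c • 1).range, X x ∈ (X - c • 1).range := by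
  rintro _ ⟨y, rfl⟩
  exact ⟨X y, by simp⟩

end CommRing

section Field

variable {K V V' : Type*} [Field K] [AddCommGroup V] [Module K V]
  [AddCommGroup V'] [Module K V'] {ω ω' : LinearMap.BilinForm K V}

open Polynomial in
theorem genEigenspace_two_le_eigenspace {f : Module.End K V} {c : K}
    (hc : ¬(X - C c) ^ 2 ∣ minpoly K f) : f.genEigenspace c 2 ≤ f.eigenspace c := by
  classical
  have gcd_dvd : EuclideanDomain.gcd ((X - C c) ^ 2) (minpoly K f) ∣ X - C c := by
    obtain ⟨i, hi, assoc⟩ :=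
      (dvd_prime_pow (prime_X_sub_C c) 2).1 (EuclideanDomain.gcd_dvd_left _ (minpoly K f))
    have i_le : i ≤ 1 := by
      by_contra! h
      obtain rfl : i = 2 := by lia
      exact hc (assoc.symm.dvd.trans (EuclideanDomain.gcd_dvd_right _ _))
    simpa using assoc.dvd.trans (pow_dvd_pow (X - C c) i_le)
  obtain ⟨a, b, bezout⟩ : ∃ a b, a * (X - C c) ^ 2 + b * minpoly K f = X - C c := by
    rwa [← Ideal.mem_span_pair, ← EuclideanDomain.span_gcd, Ideal.mem_span_singleton]
  have aeval_eq : aeval f (X - C c) = f - c • 1 := by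
    rw [map_sub, aeval_X, aeval_C, Algebra.algebraMap_eq_smul_one]
  intro v hv
  rw [← Nat.cast_ofNat, Module.End.mem_genEigenspace_nat, LinearMap.mem_ker] at hv
  rw [Module.End.eigenspace_def, LinearMap.mem_ker, ← aeval_eq, ← bezout]
  simp only [map_add, map_mul, map_pow, aeval_eq, minpoly.aeval, mul_zero, add_zero,
    Module.End.mul_apply, hv, map_zero]

theorem exists_apply_eq_one_of_nondegenerate [Nontrivial V] (hω : ω.Nondegenerate) :
    ∃ v w, ω v w = 1 := by
  obtain ⟨v, hv⟩ := exists_ne (0 : V)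
  obtain ⟨w, hw⟩ : ∃ w, ω v w ≠ 0 := by
    by_contra! h
    exact hv (hω.1 v h)
  exact ⟨v, (ω v w)⁻¹ • w, by rw [map_smul, smul_eq_mul, inv_mul_cancel₀ hw]⟩

variable [FiniteDimensional K V] [FiniteDimensional K V']

theorem finrank_orthogonal_span_pair_add_two (hω : ω.IsAlt) {v w : V} (hvw : ω v w = 1) :
    Module.finrank K (ω.orthogonal (Submodule.span K {v, w})) + 2 = Module.finrank K V := by
  have finrank_span : Module.finrank K (Submodule.span K {v, w}) = 2 := by
    rw [← Matrix.range_cons_cons_empty v w ![],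
      finrank_span_eq_card (linearIndependent_pair_of_isAlt hω hvw), Fintype.card_fin]
  have compl := (LinearMap.BilinForm.isCompl_orthogonal_iff_disjoint hω.isRefl).2
    (disjoint_span_pair_orthogonal hω hvw)
  rw [← Submodule.finrank_add_eq_of_isCompl compl, finrank_span, add_comm]

theorem IsSymplectic.exists_isometry {ω' : LinearMap.BilinForm K V'} (hω : IsSymplectic ω)
    (hω' : IsSymplectic ω')
    (finrank_eq : Module.finrank K V = Module.finrank K V') :
    ∃ f : V →ₗ[K] V', ω'.comp f f = ω := by
  induction h : Module.finrank K V using Nat.strong_induction_on generalizing V V' with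
  | _ n ih =>
  rcases subsingleton_or_nontrivial V with _ | _
  · exact ⟨0, LinearMap.ext₂ fun x y => by simp [Subsingleton.elim x 0]⟩
  have : Nontrivial V' := Module.nontrivial_of_finrank_pos (R := K)
    (finrank_eq ▸ Module.finrank_pos)
  obtain ⟨v, w, hvw⟩ := exists_apply_eq_one_of_nondegenerate hω.nondegenerate
  obtain ⟨v', w', hvw'⟩ := exists_apply_eq_one_of_nondegenerate hω'.nondegenerate
  have finrank_V := finrank_orthogonal_span_pair_add_two hω.isAlt hvw
  have finrank_V' := finrank_orthogonal_span_pair_add_two hω'.isAlt hvw'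
  have compl := (LinearMap.BilinForm.isCompl_orthogonal_iff_disjoint hω.isAlt.isRefl).2
    (disjoint_span_pair_orthogonal hω.isAlt hvw)
  have compl' := (LinearMap.BilinForm.isCompl_orthogonal_iff_disjoint hω'.isAlt.isRefl).2
    (disjoint_span_pair_orthogonal hω'.isAlt hvw')
  obtain ⟨f, hf, f_mem⟩ := exists_isometry_span_pair hω.isAlt hω'.isAlt hvw hvw'
  obtain ⟨g, hg⟩ := ih _ (by lia) (hω.restrict_right compl.codisjoint le_rfl)
    (hω'.restrict_right compl'.codisjoint le_rfl) (by lia) rfl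
  exact ⟨LinearMap.ofIsCompl compl f (Submodule.subtype _ ∘ₗ g),
    comp_ofIsCompl hω.isAlt.isRefl hω'.isAlt.isRefl compl le_rfl hf hg
      fun x y => (g y).2 _ (f_mem x)⟩

/-! ### Isometries commuting with an operator -/

theorem IsSymplectic.leftAdjoint_eq_iff (hω : IsSymplectic ω) {S T : Module.End K V} :
    ω.leftAdjointOfNondegenerate hω.nondegenerate T = S ↔ LinearMap.IsAdjointPair ω ω S T :=
  eq_comm.trans (LinearMap.BilinForm.isAdjointPair_iff_eq_of_nondegenerate _ _ _ _).symm

/-- The star ring structure on endomorphisms in which `star` is the adjoint with respect to a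
symplectic form. -/
noncomputable abbrev IsSymplectic.adjointStarRing (hω : IsSymplectic ω) :
    StarRing (Module.End K V) :=
  have isAdjointPair (T) := hω.leftAdjoint_eq_iff.1 (rfl : _ = ω.leftAdjointOfNondegenerate _ T)
  { star := ω.leftAdjointOfNondegenerate hω.nondegenerate
    star_involutive := fun T => hω.leftAdjoint_eq_iff.2 <|
      isAdjointPair_swap_of_isAlt hω.isAlt (isAdjointPair T)
    star_mul := fun S T => hω.leftAdjoint_eq_iff.2 <| (isAdjointPair T).mul (isAdjointPair S)
    star_add := fun S T => hω.leftAdjoint_eq_iff.2 <| (isAdjointPair S).add (isAdjointPair T) }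

theorem IsSymplectic.exists_isUnit_isAdjointPair (hω : IsSymplectic ω) (hω' : IsSymplectic ω') :
    ∃ A : Module.End K V, IsUnit A ∧ LinearMap.IsAdjointPair ω ω A A ∧
      ∀ x y, ω (A x) y = ω' x y := by
  let A := ω'.symmCompOfNondegenerate ω hω.nondegenerate
  have apply_A (x y : V) : ω (A x) y = ω' x y :=
    LinearMap.BilinForm.symmCompOfNondegenerate_left_apply ω' hω.nondegenerate y x
  refine ⟨A, ?_, fun x y => ?_, apply_A⟩
  · rw [LinearMap.isUnit_iff_ker_eq_bot, LinearMap.ker_eq_bot']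
    intro x hx
    exact hω'.nondegenerate.1 x fun y => by rw [← apply_A, hx, map_zero, LinearMap.zero_apply]
  · rw [apply_A, ← hω.isAlt.neg_eq, apply_A, hω'.isAlt.neg_eq]

theorem IsSymplectic.isCentralizerPullback_of_eigenspace_eq_bot [Finite K]
    (hω : IsSymplectic ω) (hω' : IsSymplectic ω')
    {X : Module.End K V} (orth : ω.IsOrthogonal X) (orth' : ω'.IsOrthogonal X)
    (hX : ∀ c : K, c ^ 2 = 1 → X.eigenspace c = ⊥) : IsCentralizerPullback X ω ω' := by
  let _ := hω.adjointStarRing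
  have : Finite V := Module.finite_of_finite K
  have : Finite (Module.End K V) := Module.finite_of_finite K
  obtain ⟨A, isUnit_A, selfAdj_A, apply_A⟩ := hω.exists_isUnit_isAdjointPair hω'
  have isAdjointPair_star (T : Module.End K V) :
      LinearMap.IsAdjointPair ω ω (star T : Module.End K V) T :=
    hω.leftAdjoint_eq_iff.1 rfl
  have injective_X : Function.Injective X := injective_of_isOrthogonal hω.nondegenerate orth
  have star_mul_X : star X * X = 1 :=
    LinearMap.ext fun x => LinearMap.ker_eq_bot.1 hω.nondegenerate.ker_eq_bot <|
      LinearMap.ext fun y => (isAdjointPair_star X (X x) y).trans (orth x y)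
  have mul_star_X : X * star X = 1 := mul_eq_one_comm.1 star_mul_X
  have : IsStarNormal X := ⟨star_mul_X.trans mul_star_X.symm⟩
  have isUnit_sub : IsUnit (X - star X) := (LinearMap.isUnit_iff_ker_eq_bot _).2 <|
    LinearMap.ker_eq_bot.2 (injective_sub_of_mul_eq_one mul_star_X hX)
  have commute_A : Commute A X := commute_of_isOrthogonal hω.nondegenerate
    (LinearMap.injective_iff_surjective.1 injective_X) orth orth' apply_A
  obtain ⟨h, hhX, hh⟩ := exists_commute_star_mul_eq isUnit_sub isUnit_A
    (hω.leftAdjoint_eq_iff.2 selfAdj_A) commute_A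
  refine ⟨h, hhX, LinearMap.ext₂ fun x y => ?_⟩
  rw [LinearMap.BilinForm.comp_apply, ← apply_A, ← hh, Module.End.mul_apply, isAdjointPair_star]

theorem isCompl_eigenspace_range_sub {X : Module.End K V} {c : K}
    (hX : X.genEigenspace c 2 ≤ X.eigenspace c) : IsCompl (X.eigenspace c) (X - c • 1).range := by
  have disjoint : Disjoint (X.eigenspace c) (X - c • 1).range := by
    rw [Submodule.disjoint_def]
    rintro _ hv ⟨u, rfl⟩
    have mem_ker : u ∈ ((X - c • 1) ^ 2).ker := by
      rw [Module.End.eigenspace_def] at hv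
      rwa [LinearMap.mem_ker, sq, Module.End.mul_apply]
    have hu := hX (Module.End.mem_genEigenspace_nat.2 mem_ker)
    rwa [Module.End.eigenspace_def] at hu
  refine (Submodule.isCompl_iff_disjoint _ _ ?_).2 disjoint
  rw [Module.End.eigenspace_def, add_comm, LinearMap.finrank_range_add_finrank_ker]

theorem IsSymplectic.isCentralizerPullback_of_range_sub (hω : IsSymplectic ω)
    (hω' : IsSymplectic ω') {X : Module.End K V} (orth : ω.IsOrthogonal X)
    (orth' : ω'.IsOrthogonal X) {c : K} (hc : c ^ 2 = 1)
    (hX : X.genEigenspace c 2 ≤ X.eigenspace c)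
    (onRange : IsSymplectic (ω.restrict (X - c • 1).range) →
      IsSymplectic (ω'.restrict (X - c • 1).range) →
      IsCentralizerPullback (X.restrict (apply_mem_range_sub X c))
        (ω.restrict (X - c • 1).range) (ω'.restrict (X - c • 1).range)) :
    IsCentralizerPullback X ω ω' := by
  have compl := isCompl_eigenspace_range_sub hX
  have ortho := range_sub_le_orthogonal_eigenspace orth hc
  have ortho' := range_sub_le_orthogonal_eigenspace orth' hc
  have restrict_apply (x : X.eigenspace c) :
      X.restrict (X.mapsTo_genEigenspace_of_comm (Commute.refl X) c 1) x = c • x :=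
    Subtype.ext (Module.End.mem_eigenspace_iff.1 x.2)
  have onEigenspace : IsCentralizerPullback
      (X.restrict (X.mapsTo_genEigenspace_of_comm (Commute.refl X) c 1))
      (ω.restrict (X.eigenspace c)) (ω'.restrict (X.eigenspace c)) := by
    obtain ⟨f, hf⟩ := (hω'.restrict_left compl.codisjoint ortho').exists_isometry
      (hω.restrict_left compl.codisjoint ortho) rfl
    refine ⟨f, LinearMap.ext fun x => ?_, hf⟩
    rw [Module.End.mul_apply, Module.End.mul_apply, restrict_apply, restrict_apply, map_smul]
  exact .of_isCompl hω.isAlt.isRefl hω'.isAlt.isRefl compl ortho ortho' onEigenspace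
    (onRange (hω.restrict_right compl.codisjoint ortho)
      (hω'.restrict_right compl.codisjoint ortho'))

theorem IsSymplectic.isCentralizerPullback [Finite K] (hω : IsSymplectic ω)
    (hω' : IsSymplectic ω') {X : Module.End K V} (orth : ω.IsOrthogonal X)
    (orth' : ω'.IsOrthogonal X) (hX : ∀ c : K, c ^ 2 = 1 → X.genEigenspace c 2 ≤ X.eigenspace c) :
    IsCentralizerPullback X ω ω' := by
  refine hω.isCentralizerPullback_of_range_sub hω' orth orth' (one_pow 2) (hX 1 (one_pow 2))
    fun hω₁ hω₁' => ?_
  set X₁ : Module.End K (X - (1 : K) • 1).range := X.restrict (apply_mem_range_sub X 1)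
  have eigenspace_one : X₁.eigenspace 1 = ⊥ := Module.End.eigenspace_restrict_eq_bot _
    (isCompl_eigenspace_range_sub (hX 1 (one_pow 2))).disjoint
  have hX₁ : X₁.genEigenspace (-1) 2 ≤ X₁.eigenspace (-1) := by
    rw [Module.End.eigenspace, Module.End.genEigenspace_restrict,
      Module.End.genEigenspace_restrict]
    exact Submodule.comap_mono (hX (-1) neg_one_sq)
  have orth₁ : (ω.restrict _).IsOrthogonal X₁ := fun x y => orth x y
  have orth₁' : (ω'.restrict _).IsOrthogonal X₁ := fun x y => orth' x y
  refine hω₁.isCentralizerPullback_of_range_sub hω₁' orth₁ orth₁' neg_one_sq hX₁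
    fun hω₂ hω₂' => ?_
  refine hω₂.isCentralizerPullback_of_eigenspace_eq_bot hω₂' (fun x y => orth₁ x y)
    (fun x y => orth₁' x y) fun c hc => ?_
  rcases sq_eq_one_iff.1 hc with rfl | rfl
  · exact Module.End.eigenspace_restrict_eq_bot _ (eigenspace_one ▸ disjoint_bot_left)
  · exact Module.End.eigenspace_restrict_eq_bot _ (isCompl_eigenspace_range_sub hX₁).disjoint

theorem IsSymplectic.exists_isOrthogonal_semiconjBy [Finite K] (hω : IsSymplectic ω)
    {X Y P : Module.End K V} (orthX : ω.IsOrthogonal X) (orthY : ω.IsOrthogonal Y)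
    (hP : Function.Injective P) (hPXY : SemiconjBy P X Y)
    (hX : ∀ c : K, c ^ 2 = 1 → X.genEigenspace c 2 ≤ X.eigenspace c) :
    ∃ g : Module.End K V, ω.IsOrthogonal g ∧ SemiconjBy g X Y := by
  have P_apply (x : V) : P (X x) = Y (P x) := LinearMap.congr_fun hPXY.eq x
  have orth' : (ω.comp P P).IsOrthogonal X := fun x y => by
    rw [LinearMap.BilinForm.comp_apply, P_apply, P_apply, orthY, LinearMap.BilinForm.comp_apply]
  have hω' := hω.comp_of_bijective ⟨hP, LinearMap.injective_iff_surjective.1 hP⟩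
  obtain ⟨h, hhX, hh⟩ := hω'.isCentralizerPullback hω orth' orthX hX
  exact ⟨P * h, LinearMap.congr_fun₂ hh, hPXY.mul_left hhX⟩

end Field

/-! ### Matrices -/

section Matrix

variable {R K ι : Type*} [CommRing R] [Field K] [Fintype ι] [DecidableEq ι]

open Polynomial in
theorem minpoly_transpose (A : Matrix ι ι K) : minpoly K Aᵀ = minpoly K A := by
  have aeval_transpose (A : Matrix ι ι K) (p : K[X]) : aeval Aᵀ p = (aeval A p)ᵀ := by
    simp [aeval_eq_sum_range, transpose_sum]
  have dvd (A : Matrix ι ι K) : minpoly K Aᵀ ∣ minpoly K A :=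
    minpoly.dvd _ _ (by rw [aeval_transpose, minpoly.aeval, transpose_zero])
  exact eq_of_monic_of_associated (minpoly.monic (Matrix.isIntegral _))
    (minpoly.monic (Matrix.isIntegral _)) (associated_of_dvd_dvd (dvd A) (by simpa using dvd Aᵀ))

theorem isAlt_toBilin' {B : Matrix ι ι R} (hBskew : Bᵀ = -B) (hBdiag : ∀ i, B i i = 0) :
    (toBilin' B).IsAlt := fun x => by
  rw [toBilin'_apply, ← Fintype.sum_prod_type']
  refine Finset.sum_involution (fun p _ => p.swap) (fun p _ => ?_) (fun p _ hp heq => hp ?_)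
    (fun _ _ => Finset.mem_univ _) fun _ _ => Prod.swap_swap _
  · have : B p.2 p.1 = -B p.1 p.2 := congrFun₂ hBskew p.1 p.2
    simp only [Prod.fst_swap, Prod.snd_swap, this]
    ring
  · have : p.2 = p.1 := congrArg Prod.fst heq
    rw [this, hBdiag, mul_zero, zero_mul]

theorem isSymplectic_toBilin' {B : Matrix ι ι K} (hB : IsUnit B)
    (hBskew : Bᵀ = -B) (hBdiag : ∀ i, B i i = 0) : IsSymplectic (toBilin' B) :=
  ⟨isAlt_toBilin' hBskew hBdiag, LinearMap.BilinForm.nondegenerate_toBilin'_of_det_ne_zero' B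
    ((Matrix.isUnit_iff_isUnit_det B).1 hB).ne_zero⟩

theorem isOrthogonal_toBilin'_iff {B g : Matrix ι ι R} :
    (toBilin' B).IsOrthogonal (toLin' gᵀ) ↔ g * B * gᵀ = B := by
  rw [← toBilin'.injective.eq_iff, ← transpose_transpose g, transpose_transpose gᵀ,
    ← toBilin'_comp, LinearMap.ext_iff₂]
  rfl

theorem semiconjBy_toLin'_transpose_iff {P X Y : Matrix ι ι R} :
    SemiconjBy (toLin' Pᵀ) (toLin' Xᵀ) (toLin' Yᵀ) ↔ X * P = P * Y := by
  rw [SemiconjBy, Module.End.mul_eq_comp, Module.End.mul_eq_comp, ← toLin'_mul,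
    ← toLin'_mul, toLin'.injective.eq_iff, ← transpose_mul, ← transpose_mul,
    transpose_injective.eq_iff]

theorem eq_inv_mul_mul_iff {P X Y : Matrix ι ι R} (hP : IsUnit P) :
    Y = P⁻¹ * X * P ↔ X * P = P * Y := by
  have := hP.invertible
  rw [eq_comm, Matrix.mul_assoc, inv_mul_eq_iff_eq_mul_of_invertible]

open Polynomial in
theorem semisimple_symplectic_conjugate_iff_similar_general [Finite K]
    {B : Matrix ι ι K} (hB : IsUnit B) (hBskew : Bᵀ = -B) (hBdiag : ∀ i, B i i = 0)
    {X₁ X₂ : Matrix ι ι K} (hX₁B : X₁ * B * X₁ᵀ = B)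
    (hX₂B : X₂ * B * X₂ᵀ = B) (hX₁ : ∀ c : K, c ^ 2 = 1 → ¬(X - C c) ^ 2 ∣ minpoly K X₁) :
    (∃ g : Matrix ι ι K, IsUnit g ∧ g * B * gᵀ = B ∧ X₂ = g⁻¹ * X₁ * g) ↔
      (∃ P : Matrix ι ι K, IsUnit P ∧ X₂ = P⁻¹ * X₁ * P) := by
  refine ⟨fun ⟨g, hg, _, hgX⟩ => ⟨g, hg, hgX⟩, fun ⟨P, hP, hPX⟩ => ?_⟩
  have hω := isSymplectic_toBilin' hB hBskew hBdiag
  have hPt : Function.Injective (toLin' Pᵀ) :=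
    mulVec_injective_iff_isUnit.2 ((isUnit_transpose P).2 hP)
  obtain ⟨g, orth, semiconj⟩ := hω.exists_isOrthogonal_semiconjBy
    (isOrthogonal_toBilin'_iff.2 hX₁B) (isOrthogonal_toBilin'_iff.2 hX₂B) hPt
    (semiconjBy_toLin'_transpose_iff.2 ((eq_inv_mul_mul_iff hP).1 hPX)) fun c hc =>
      genEigenspace_two_le_eigenspace (by rw [minpoly_toLin', minpoly_transpose]; exact hX₁ c hc)
  obtain ⟨g, rfl⟩ : ∃ G : Matrix ι ι K, toLin' Gᵀ = g :=
    ⟨(LinearMap.toMatrix' g)ᵀ, by rw [transpose_transpose, toLin'_toMatrix']⟩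
  have hg : IsUnit g := (isUnit_transpose g).1 <|
    mulVec_injective_iff_isUnit.1 (injective_of_isOrthogonal hω.nondegenerate orth)
  exact ⟨g, hg, isOrthogonal_toBilin'_iff.1 orth,
    (eq_inv_mul_mul_iff hg).2 (semiconjBy_toLin'_transpose_iff.1 semiconj)⟩

end Matrix

/-- Semisimple elements of a symplectic group over a finite field are conjugate in the
symplectic group if and only if they are similar (conjugate in `GL(n,F)`). -/
theorem semisimple_symplectic_conjugate_iff_similar
    {F : Type*} [Field F] [Fintype F] {n : ℕ}
    (B : Matrix (Fin n) (Fin n) F) (hB : IsUnit B)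
    (hBskew : Bᵀ = -B) (hBdiag : ∀ i, B i i = 0)
    (X₁ X₂ : Matrix (Fin n) (Fin n) F)
    (hX₁ : IsUnit X₁) (hX₂ : IsUnit X₂)
    (hX₁B : X₁ * B * X₁ᵀ = B) (hX₂B : X₂ * B * X₂ᵀ = B)
    (hss₁ : Squarefree (minpoly F X₁)) (hss₂ : Squarefree (minpoly F X₂)) :
    (∃ g : Matrix (Fin n) (Fin n) F, IsUnit g ∧ g * B * gᵀ = B ∧ X₂ = g⁻¹ * X₁ * g) ↔
      (∃ P : Matrix (Fin n) (Fin n) F, IsUnit P ∧ X₂ = P⁻¹ * X₁ * P) :=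
  semisimple_symplectic_conjugate_iff_similar_general hB hBskew hBdiag hX₁B hX₂B fun c _ h =>
    Polynomial.not_isUnit_X_sub_C c (hss₁ _ (sq (Polynomial.X - Polynomial.C c) ▸ h))
end

section
/- Let q be a prime power, K the field with q² elements with Frobenius automorphism σ(a) = a^q, and B ∈ M_n(K) an invertible hermitian matrix (B* = B, where B* = (σB)ᵀ). Let 𝒞(B) = {g ∈ M_n(K) : g invertible, g·B·g* = B} be the corresponding unitary group. Let X₁, X₂ ∈ 𝒞(B) be semisimple. Then X₁ and X₂ are conjugate by an element of 𝒞(B) if and only if X₁ and X₂ are similar (conjugate in GL(n,K)). -/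
open Matrix

/-- For a matrix over the field `K` with `q²` elements, `X* = (σX)ᵀ` where `σ(a) = a^q`
is the Frobenius automorphism. -/
def hermStar {K : Type*} [Field K] {n : ℕ} (q : ℕ) (X : Matrix (Fin n) (Fin n) K) :
    Matrix (Fin n) (Fin n) K :=
  (X.map fun a => a ^ q)ᵀ

/-!
Let `A` be the matrix algebra with involution `X ↦ X*`. The key fact is that every self-adjoint
unit `c` of `A` has the form `h * h*` with `h` in the commutative algebra `K[c]`: writing
`h = r + i ω` with `r`, `i` self-adjoint in `K[c]` and `σ ω ≠ ω`, the equation `h * h* = c` says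
that `c` is the norm of `r + i ω` from a quadratic algebra with unit discriminant over a finite
commutative ring. Such a norm represents every element of a finite field, and Newton's method lifts
solutions from the residue fields.

Taking `c = B = s * s*` and conjugating by `s` turns `𝒞(B)` into the group of unitary elements of
`A`. If `p * u = v * p` with `u`, `v` unitary, then `p * p*` commutes with `v`; writing
`p * p* = h * h*` with `h ∈ K[p * p*]`, the element `h⁻¹ * p` is unitary and still carries `u` to
`v`.
-/

section QuadraticNorm

open Polynomial

theorem exists_sq_add_mul_sq_eq {F : Type*} [Field F] [Finite F] (hF : ringChar F ≠ 2) {d : F}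
    (hd : d ≠ 0) (c : F) : ∃ x y : F, x ^ 2 + d * y ^ 2 = c := by
  have := Fintype.ofFinite F
  obtain ⟨x, y, hxy⟩ := FiniteField.exists_root_sum_quadratic
    (f := X ^ 2 - C c) (g := C d * X ^ 2) (degree_X_pow_sub_C two_pos c)
    (by rw [degree_C_mul hd, degree_X_pow]; rfl) (FiniteField.odd_card_of_char_ne_two hF)
  refine ⟨x, y, ?_⟩
  simp only [eval_sub, eval_pow, eval_X, eval_C, eval_mul] at hxy
  linear_combination hxy

theorem exists_quadraticAlgebra_norm_eq_of_disc_ne_zero {F : Type*} [Field F] [Finite F]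
    {a b : F} (hd : b ^ 2 + 4 * a ≠ 0) (c : F) : ∃ z : QuadraticAlgebra F a b, z.norm = c := by
  by_cases hF : ringChar F = 2
  · obtain ⟨x, rfl⟩ := FiniteField.isSquare_of_char_two hF c
    exact ⟨⟨x, 0⟩, by simp [QuadraticAlgebra.norm_def]⟩
  · have h2 : (2 : F) ≠ 0 := Ring.two_ne_zero hF
    obtain ⟨x, y, hxy⟩ := exists_sq_add_mul_sq_eq hF (neg_ne_zero.2 hd) (4 * c)
    -- Completing the square: `4 * norm z = (2 * z.re + b * z.im) ^ 2 - (b ^ 2 + 4 * a) * z.im ^ 2`.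
    refine ⟨⟨(x - b * y) / 2, y⟩, ?_⟩
    simp only [QuadraticAlgebra.norm_def]
    field_simp
    linear_combination hxy

variable {R : Type*} [CommRing R]

theorem exists_isNilpotent_sub_quadraticAlgebra_norm [Finite R] {a b : R}
    (hd : IsUnit (b ^ 2 + 4 * a)) (c : R) :
    ∃ z : QuadraticAlgebra R a b, IsNilpotent (c - z.norm) := by
  have hresidue (I : MaximalSpectrum R) : ∃ x y : R ⧸ I.asIdeal,
      x * x + Ideal.Quotient.mk _ b * x * y - Ideal.Quotient.mk _ a * y * y =
        Ideal.Quotient.mk _ c := by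
    let := Ideal.Quotient.field I.asIdeal
    have : Finite (R ⧸ I.asIdeal) := Quotient.finite _
    have hd' := (hd.map (Ideal.Quotient.mk I.asIdeal)).ne_zero
    simp only [map_add, map_pow, map_mul, map_ofNat] at hd'
    obtain ⟨z, hz⟩ := exists_quadraticAlgebra_norm_eq_of_disc_ne_zero hd'
      (Ideal.Quotient.mk _ c)
    exact ⟨z.re, z.im, hz⟩
  choose x y hxy using hresidue
  have hcoprime := fun I J : MaximalSpectrum R ↦ I.isCoprime_of_ne (J := J)
  obtain ⟨r, hr⟩ := Ideal.pi_quotient_surjective hcoprime x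
  obtain ⟨i, hi⟩ := Ideal.pi_quotient_surjective hcoprime y
  refine ⟨⟨r, i⟩, ?_⟩
  rw [← mem_nilradical, IsArtinianRing.nilradical_eq_iInf, Ideal.mem_iInf]
  intro I
  rw [← Ideal.Quotient.mk_eq_mk_iff_sub_mem, ← hxy I, ← hr I, ← hi I]
  simp only [QuadraticAlgebra.norm_def, map_add, map_sub, map_mul]

theorem exists_quadraticAlgebra_norm_eq_one_add {a b : R} (hd : IsUnit (b ^ 2 + 4 * a)) {t : R}
    (ht : IsNilpotent t) : ∃ z : QuadraticAlgebra R a b, z.norm = 1 + t := by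
  -- The element `w = 2 * a + b * ω` has trace `d` and norm `a * d`, where `d = b ^ 2 + 4 * a`, so
  -- `norm (1 + y * w) = 1 + d * y + a * d * y ^ 2` has unit derivative at `y = 0`.
  obtain ⟨y, ⟨-, hy⟩, -⟩ := existsUnique_nilpotent_sub_and_aeval_eq_zero
    (P := C (a * (b ^ 2 + 4 * a)) * X ^ 2 + C (b ^ 2 + 4 * a) * X - C t) (x := (0 : R))
    (by simpa using ht) (by simpa using hd)
  refine ⟨⟨1 + 2 * a * y, b * y⟩, ?_⟩
  simp only [map_sub, map_add, map_mul, map_pow, aeval_X, aeval_C, Algebra.algebraMap_self,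
    RingHom.id_apply] at hy
  rw [QuadraticAlgebra.norm_def]
  linear_combination hy

theorem exists_quadraticAlgebra_norm_eq_of_isUnit [Finite R] {a b c : R}
    (hd : IsUnit (b ^ 2 + 4 * a)) (hc : IsUnit c) : ∃ z : QuadraticAlgebra R a b, z.norm = c := by
  obtain ⟨z, hz⟩ := exists_isNilpotent_sub_quadraticAlgebra_norm hd c
  have hzu : IsUnit z.norm := by
    simpa using hz.neg.isUnit_add_left_of_commute hc (Commute.all _ _)
  obtain ⟨u, hu⟩ := hzu
  obtain ⟨w, hw⟩ := exists_quadraticAlgebra_norm_eq_one_add hd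
    ((Commute.all (↑u⁻¹ : R) (c - z.norm)).isNilpotent_mul_left hz)
  refine ⟨z * w, ?_⟩
  rw [map_mul, hw, ← hu, mul_add, mul_one, Units.mul_inv_cancel_left, add_sub_cancel]

end QuadraticNorm

section StarRing

theorem isUnit_of_isUnit_map_of_injective {M N : Type*} [Monoid M] [Finite M] [Monoid N]
    (f : M →ₙ* N) (hf : Function.Injective f) {x : M} (hx : IsUnit (f x)) : IsUnit x :=
  IsLeftRegular.isUnit_of_finite fun y z hyz ↦
    hf <| hx.mul_left_cancel <| by simpa only [map_mul] using congrArg f hyz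

theorem exists_mul_star_self_eq {S : Type*} [CommRing S] [StarRing S] [Finite S] {ω c : S}
    (hω : IsUnit (ω - star ω)) (hc : IsSelfAdjoint c) (hcu : IsUnit c) :
    ∃ h : S, h * star h = c := by
  let coe : selfAdjoint S →ₙ* S := ⟨Subtype.val, fun _ _ ↦ rfl⟩
  have isUnit_of_coe {x : selfAdjoint S} (hx : IsUnit (x : S)) : IsUnit x :=
    isUnit_of_isUnit_map_of_injective coe Subtype.val_injective hx
  let T : selfAdjoint S := ⟨ω + star ω, IsSelfAdjoint.add_star_self ω⟩
  let N : selfAdjoint S := ⟨ω * star ω, IsSelfAdjoint.mul_star_self ω⟩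
  have hdisc : ((T ^ 2 + 4 * -N : selfAdjoint S) : S) = (ω - star ω) ^ 2 := by
    change (ω + star ω) ^ 2 + 4 * -(ω * star ω) = (ω - star ω) ^ 2
    ring
  obtain ⟨z, hz⟩ := exists_quadraticAlgebra_norm_eq_of_isUnit (a := -N) (b := T) (c := ⟨c, hc⟩)
    (isUnit_of_coe (hdisc ▸ hω.pow 2)) (isUnit_of_coe hcu)
  refine ⟨z.re + z.im * ω, ?_⟩
  have hz' : (z.re * z.re + (ω + star ω) * z.re * z.im - -(ω * star ω) * z.im * z.im : S) = c :=
    congrArg Subtype.val hz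
  rw [star_add, star_mul, z.re.2.star_eq, z.im.2.star_eq]
  linear_combination hz'

theorem semiconjBy_star_of_unitary {M : Type*} [Monoid M] [StarMul M] {u v : unitary M} {p : M}
    (hp : SemiconjBy p (u : M) v) : SemiconjBy (star p) (v : M) u := by
  have hinv : p * star (u : M) = star (v : M) * p :=
    SemiconjBy.units_inv_right (x := Unitary.toUnits u) (y := Unitary.toUnits v) hp
  simpa [SemiconjBy] using (congrArg star hinv).symm

theorem inv_mul_mul_mem_unitary_iff {M : Type*} [Monoid M] [StarMul M] [IsDedekindFiniteMonoid M]
    (s : Mˣ) (x : M) : ↑s⁻¹ * x * s ∈ unitary M ↔ x * (s * star s) * star x = s * star s := by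
  have hstar : (star (↑s⁻¹ : M)) = ↑(star s)⁻¹ := rfl
  rw [Unitary.mem_iff, mul_eq_one_comm, and_self, star_mul, star_mul, hstar, ← mul_assoc,
    ← mul_assoc, Units.mul_inv_eq_one, mul_assoc, mul_assoc, mul_assoc, mul_assoc,
    Units.inv_mul_eq_iff_eq_mul, Units.coe_star]
  simp only [mul_assoc]

theorem commute_of_mem_adjoin_of_isSelfAdjoint {K A : Type*} [CommSemiring K] [StarRing K]
    [Semiring A] [StarRing A] [Algebra K A] [StarModule K A] {c h x : A} (hc : IsSelfAdjoint c)
    (hh : h ∈ StarAlgebra.adjoin K {c}) (hx : Commute x c) : Commute x h := by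
  have hxc : x ∈ StarSubalgebra.centralizer K {c} := by
    rw [StarSubalgebra.mem_centralizer_iff]
    rintro _ rfl
    exact ⟨hx.symm, by rw [hc.star_eq]; exact hx.symm⟩
  have hh' := StarAlgebra.adjoin_le_centralizer_centralizer K {c} hh
  exact ((StarSubalgebra.mem_centralizer_iff K).1 hh' x hxc).1

variable {K A : Type*} [CommRing K] [StarRing K] [Ring A] [StarRing A] [Algebra K A]
  [StarModule K A] [Finite A] {ω : K}

theorem exists_mem_adjoin_mul_star_self_eq (hω : IsUnit (ω - star ω)) {c : A}
    (hc : IsSelfAdjoint c) (hcu : IsUnit c) :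
    ∃ h : Aˣ, (h : A) ∈ StarAlgebra.adjoin K {c} ∧ (h * star h : A) = c := by
  let S := StarAlgebra.adjoin K {c}
  have : IsStarNormal c := hc.isStarNormal
  let c' : S := ⟨c, StarAlgebra.self_mem_adjoin_singleton K c⟩
  have hωS : IsUnit (algebraMap K S ω - star (algebraMap K S ω)) := by
    simpa only [map_sub, algebraMap_star_comm] using hω.map (algebraMap K S)
  have hc'u : IsUnit c' := isUnit_of_isUnit_map_of_injective
    (S.subtype : S →ₙ* A) Subtype.val_injective hcu
  open scoped IsMulCommutative in
  obtain ⟨h, hh⟩ := exists_mul_star_self_eq hωS (c := c') (Subtype.ext hc) hc'u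
  have hh' : (h * star h : A) = c := congrArg Subtype.val hh
  exact ⟨(isUnit_of_mul_isUnit_left (hh' ▸ hcu)).unit, h.2, hh'⟩

theorem isConj_unitary_iff (hω : IsUnit (ω - star ω)) {u v : unitary A} :
    IsConj u v ↔ IsConj (u : A) (v : A) := by
  refine ⟨(unitary A).subtype.map_isConj, fun ⟨p, hp⟩ ↦ ?_⟩
  have hcomm : Commute (v : A) (p * star p) :=
    (hp.mul_left (semiconjBy_star_of_unitary hp)).symm
  obtain ⟨h, hmem, hh⟩ := exists_mem_adjoin_mul_star_self_eq hω
    (IsSelfAdjoint.mul_star_self (p : A)) (p.isUnit.mul p.isUnit.star)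
  have hvh : SemiconjBy (h : A) v v :=
    (commute_of_mem_adjoin_of_isSelfAdjoint (.mul_star_self _) hmem hcomm).symm
  let g : unitary A := ⟨↑h⁻¹ * p, (Units.inv_mul_mem_unitary h p).2 (Units.ext hh)⟩
  have hg : SemiconjBy (g : A) u v := hvh.units_inv_symm_left.mul_left hp
  exact ⟨_root_.toUnits g, Subtype.ext hg⟩

theorem exists_isometry_semiconjBy (hω : IsUnit (ω - star ω)) {b x y : A} (hb : IsSelfAdjoint b)
    (hbu : IsUnit b) (hx : x * b * star x = b) (hy : y * b * star y = b) (hxy : IsConj x y) :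
    ∃ g : Aˣ, (g * b * star g : A) = b ∧ SemiconjBy (g : A) x y := by
  obtain ⟨s, -, rfl⟩ := exists_mem_adjoin_mul_star_self_eq hω hb hbu
  have hs (t : A) : SemiconjBy (s : A) (↑s⁻¹ * t * s) t := by
    simp only [SemiconjBy, mul_assoc, Units.mul_inv_cancel_left]
  let u : unitary A := ⟨_, (inv_mul_mul_mem_unitary_iff s x).2 hx⟩
  let v : unitary A := ⟨_, (inv_mul_mul_mem_unitary_iff s y).2 hy⟩
  have huv : IsConj (u : A) v := .trans ⟨s, hs x⟩ (hxy.trans (.symm ⟨s, hs y⟩))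
  obtain ⟨g, hg⟩ := (isConj_unitary_iff hω).2 huv
  let g' : Aˣ := Units.map (unitary A).subtype g
  have hg' : SemiconjBy (g' : A) u v := congrArg Subtype.val hg
  refine ⟨s * g' * s⁻¹, (inv_mul_mul_mem_unitary_iff s _).1 ?_,
    ((hs y).mul_left hg').mul_left (hs x).units_inv_symm_left⟩
  simp [mul_assoc, g']

end StarRing

section Frobenius

variable {K : Type*} [Field K] [Fintype K] {q : ℕ}

theorem add_pow_of_card_eq_sq (hcard : Fintype.card K = q ^ 2) (x y : K) :
    (x + y) ^ q = x ^ q + y ^ q := by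
  obtain ⟨p, m, _, hp, hpm⟩ := FiniteField.card' K
  have := Fact.mk hp
  obtain ⟨k, -, rfl⟩ := (Nat.dvd_prime_pow hp).1 (hpm ▸ hcard ▸ dvd_pow_self q two_ne_zero)
  exact add_pow_char_pow x y p k

/-- The involution `a ↦ a ^ q` of the field `K` with `q ^ 2` elements, packaged so that `Xᴴ` is
`hermStar q X`. It is not an instance since it depends on a proof that `K` has `q ^ 2` elements. -/
abbrev frobeniusStarRing (hcard : Fintype.card K = q ^ 2) : StarRing K where
  star a := a ^ q
  star_involutive a := by
    change (a ^ q) ^ q = a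
    rw [← pow_mul, ← sq, ← hcard, FiniteField.pow_card]
  star_mul a b := by
    change (a * b) ^ q = b ^ q * a ^ q
    rw [mul_comm, mul_pow]
  star_add := add_pow_of_card_eq_sq hcard

theorem exists_pow_ne_of_card_eq_sq (hcard : Fintype.card K = q ^ 2) : ∃ a : K, a ^ q ≠ a := by
  have hq : 1 < q := (Nat.one_lt_pow_iff two_ne_zero).1 (hcard ▸ Fintype.one_lt_card)
  have hlt : q - 1 < Nat.card Kˣ := by
    rw [Nat.card_units, Nat.card_eq_fintype_card, hcard]
    exact Nat.sub_lt_sub_right hq.le (lt_self_pow₀ hq one_lt_two)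
  obtain ⟨u, hu⟩ := exists_pow_ne_one_of_isCyclic (Nat.sub_ne_zero_of_lt hq) hlt
  refine ⟨u, fun h ↦ hu ?_⟩
  rw [← Units.val_pow_eq_pow_val, Units.val_inj] at h
  rw [← mul_left_inj u, pow_sub_one_mul (Nat.ne_zero_of_lt hq), h, one_mul]

end Frobenius

theorem eq_inv_mul_mul_iff_semiconjBy {m R : Type*} [Fintype m] [DecidableEq m] [CommRing R]
    (P : (Matrix m m R)ˣ) (X Y : Matrix m m R) :
    Y = (P : Matrix m m R)⁻¹ * X * P ↔ SemiconjBy (P : Matrix m m R) Y X := by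
  rw [← coe_units_inv, mul_assoc, Units.eq_inv_mul_iff_mul_eq]
  rfl

theorem semisimple_unitary_conjugate_iff_similar_general {q : ℕ} {K : Type*} [Field K] [Fintype K]
    (hcard : Fintype.card K = q ^ 2) {n : ℕ} {B X₁ X₂ : Matrix (Fin n) (Fin n) K} (hB : IsUnit B)
    (hBherm : hermStar q B = B) (hX₁B : X₁ * B * hermStar q X₁ = B)
    (hX₂B : X₂ * B * hermStar q X₂ = B) :
    (∃ g : Matrix (Fin n) (Fin n) K, IsUnit g ∧ g * B * hermStar q g = B ∧
        X₂ = g⁻¹ * X₁ * g) ↔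
      (∃ P : Matrix (Fin n) (Fin n) K, IsUnit P ∧ X₂ = P⁻¹ * X₁ * P) := by
  refine ⟨fun ⟨g, hg, _, h⟩ ↦ ⟨g, hg, h⟩, ?_⟩
  rintro ⟨_, ⟨P, rfl⟩, hP⟩
  let := frobeniusStarRing hcard
  obtain ⟨ω, hω⟩ := exists_pow_ne_of_card_eq_sq hcard
  have hωu : IsUnit (ω - star ω) := (sub_ne_zero.2 hω.symm).isUnit
  obtain ⟨g, hgB, hg⟩ := exists_isometry_semiconjBy hωu hBherm hB hX₂B hX₁B
    ⟨P, (eq_inv_mul_mul_iff_semiconjBy P X₁ X₂).1 hP⟩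
  exact ⟨g, g.isUnit, hgB, (eq_inv_mul_mul_iff_semiconjBy g X₁ X₂).2 hg⟩

/-- Semisimple elements of a unitary group over the field with `q²` elements are conjugate
in the unitary group if and only if they are similar (conjugate in `GL(n,K)`). -/
theorem semisimple_unitary_conjugate_iff_similar
    {p k : ℕ} [Fact p.Prime] (hk : k ≠ 0) (q : ℕ) (hq : q = p ^ k)
    {K : Type*} [Field K] [Fintype K] (hcard : Fintype.card K = q ^ 2)
    {n : ℕ} (B : Matrix (Fin n) (Fin n) K) (hB : IsUnit B)
    (hBherm : hermStar q B = B)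
    (X₁ X₂ : Matrix (Fin n) (Fin n) K)
    (hX₁ : IsUnit X₁) (hX₂ : IsUnit X₂)
    (hX₁B : X₁ * B * hermStar q X₁ = B) (hX₂B : X₂ * B * hermStar q X₂ = B)
    (hss₁ : Squarefree (minpoly K X₁)) (hss₂ : Squarefree (minpoly K X₂)) :
    (∃ g : Matrix (Fin n) (Fin n) K, IsUnit g ∧ g * B * hermStar q g = B ∧
        X₂ = g⁻¹ * X₁ * g) ↔
      (∃ P : Matrix (Fin n) (Fin n) K, IsUnit P ∧ X₂ = P⁻¹ * X₁ * P) :=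
  semisimple_unitary_conjugate_iff_similar_general hcard hB hBherm hX₁B hX₂B
end

section
/- Let F be a finite field of odd order, B ∈ M_n(F) an invertible symmetric matrix, and 𝒞(B) = {g ∈ M_n(F) : g invertible, g·B·gᵀ = B} the corresponding orthogonal group. Let x ∈ 𝒞(B) be semisimple. Then there exists y ∈ 𝒞(B) with x·y = y·x and det y = −1 if and only if x² − I is not invertible. (Equivalently: the 𝒞(B)-conjugacy class of a semisimple x with det x = 1 coincides with its conjugacy class in the special orthogonal group {g ∈ 𝒞(B) : det g = 1} when x² − I is singular, and splits into two distinct special-orthogonal classes when x² − I is invertible.) -/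
open Matrix

/-!
If `x² - 1` is invertible, then `K = x B - B xᵀ` is an invertible skew-symmetric matrix, because
`K xᵀ = B (1 - x²)ᵀ`, and every isometry `y` of `B` commuting with `x` also preserves `K`. So `y` is
symplectic and `det y = 1 ≠ -1`.

If `x² - 1` is singular, then `x` has an eigenvalue `c = ±1`. As `x` is semisimple, its left and
right `c`-eigenspaces are in perfect duality under the dot product, and `v ↦ B v` maps the former
into the latter, so `B` is nondegenerate on the left eigenspace. The latter therefore contains an
anisotropic vector, and the transpose of the reflection in it commutes with `x`.
-/

section Skew

variable {R ι : Type*} [CommRing R] [Fintype ι] [DecidableEq ι]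

theorem det_eq_one_of_preserves_congr_J {A Q : Matrix (ι ⊕ ι) (ι ⊕ ι) R} (hQ : IsUnit Q)
    (hA : A * (Q * J ι R * Qᵀ) * Aᵀ = Q * J ι R * Qᵀ) : A.det = 1 := by
  have hdet : IsUnit Q.det := (isUnit_iff_isUnit_det Q).mp hQ
  have hQt : IsUnit (Qᵀ).det := by rwa [det_transpose]
  have hsymp : Q⁻¹ * A * Q ∈ symplecticGroup ι R := by
    rw [SymplecticGroup.mem_iff]
    calc Q⁻¹ * A * Q * J ι R * (Q⁻¹ * A * Q)ᵀ
        = Q⁻¹ * (A * (Q * J ι R * Qᵀ) * Aᵀ) * (Qᵀ)⁻¹ := by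
          simp only [transpose_mul, transpose_nonsing_inv, Matrix.mul_assoc]
      _ = J ι R := by
          rw [hA, Matrix.mul_assoc Q, nonsing_inv_mul_cancel_left _ _ hdet,
            mul_nonsing_inv_cancel_right _ _ hQt]
  rw [← det_conj' hQ A, SymplecticGroup.det_eq_one hsymp]

-- `K ⊕ (-K)` has the diagonal as a Lagrangian, hence is congruent to the standard `J` over `R`
-- even though `K` itself need not be; so one applies the symplectic determinant to `y ⊕ 1`.
theorem det_eq_one_of_preserves_skew (h2 : IsUnit (2 : R)) {K y : Matrix ι ι R} (hK : IsUnit K)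
    (hskew : Kᵀ = -K) (hy : y * K * yᵀ = K) : y.det = 1 := by
  let Q : Matrix (ι ⊕ ι) (ι ⊕ ι) R := fromBlocks 1 K 1 (-K)
  have hQ : IsUnit Q := by
    have hKK : -K - 1 * K = -((2 : R) • K) := by rw [one_mul, two_smul, neg_add']
    rw [isUnit_iff_isUnit_det, det_fromBlocks_one₁₁, hKK, ← isUnit_iff_isUnit_det]
    exact (hK.smul h2.unit).neg
  have hQJ : Q * J ι R * Qᵀ = fromBlocks ((2 : R) • K) 0 0 (-((2 : R) • K)) := by
    simp [Q, J, fromBlocks_multiply, fromBlocks_transpose, hskew, two_smul]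
  have hA : (fromBlocks y 0 0 (1 : Matrix ι ι R)).det = 1 := by
    refine det_eq_one_of_preserves_congr_J hQ ?_
    simp [hQJ, fromBlocks_multiply, fromBlocks_transpose, hy]
  simpa using hA

theorem det_eq_one_of_commute_of_isUnit_sq_sub_one (h2 : IsUnit (2 : R)) {B x y : Matrix ι ι R}
    (hB : IsUnit B) (hBsym : Bᵀ = B) (hxB : x * B * xᵀ = B) (hyB : y * B * yᵀ = B)
    (hxy : x * y = y * x) (hx : IsUnit (x ^ 2 - 1)) : y.det = 1 := by
  have hK : IsUnit (x * B - B * xᵀ) := by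
    have hfac : (x * B - B * xᵀ) * xᵀ = -(B * (x ^ 2 - 1)ᵀ) := by
      rw [sub_mul, hxB, transpose_sub, transpose_pow, transpose_one, mul_sub, mul_one, neg_sub,
        sq, mul_assoc]
    exact isUnit_of_mul_isUnit_left (hfac ▸ (hB.mul ((isUnit_transpose _).mpr hx)).neg)
  refine det_eq_one_of_preserves_skew h2 hK ?_ ?_
  · simp only [transpose_sub, transpose_mul, transpose_transpose, hBsym, neg_sub]
  · calc y * (x * B - B * xᵀ) * yᵀ
        = (y * x) * B * yᵀ - y * B * (y * x)ᵀ := by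
          simp only [mul_sub, sub_mul, transpose_mul, mul_assoc]
      _ = x * (y * B * yᵀ) - (y * B * yᵀ) * xᵀ := by
          rw [← hxy]
          simp only [transpose_mul, mul_assoc]
      _ = x * B - B * xᵀ := by rw [hyB]

end Skew

section LeftEigenvectors

variable {R ι : Type*} [CommRing R] [Fintype ι]

theorem exists_left_eigenvector_of_det_sq_sub_one_eq_zero [IsDomain R] [DecidableEq ι]
    {x : Matrix ι ι R} (hx : (x ^ 2 - 1).det = 0) :
    ∃ c : R, c * c = 1 ∧ ∃ v ≠ 0, v ᵥ* x = c • v := by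
  obtain ⟨v, hv0, hv⟩ := exists_vecMul_eq_zero_iff.mpr hx
  have hvxx : (v ᵥ* x) ᵥ* x = v := by
    rwa [vecMul_sub, vecMul_one, sub_eq_zero, sq, ← vecMul_vecMul] at hv
  by_cases hplus : v ᵥ* x + v = 0
  · exact ⟨-1, by ring, v, hv0, by rw [neg_one_smul, eq_neg_of_add_eq_zero_left hplus]⟩
  · exact ⟨1, one_mul 1, v ᵥ* x + v, hplus, by rw [add_vecMul, hvxx, one_smul, add_comm]⟩

theorem mulVec_mulVec_eq_smul_of_vecMul_eq_smul {B x : Matrix ι ι R} (hxB : x * B * xᵀ = B) {c : R}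
    (hc : c * c = 1) {v : ι → R} (hv : v ᵥ* x = c • v) : x *ᵥ (B *ᵥ v) = c • (B *ᵥ v) :=
  calc x *ᵥ (B *ᵥ v) = c • (x * B) *ᵥ (c • v) := by
        rw [mulVec_smul, smul_smul, hc, one_smul, mulVec_mulVec]
    _ = c • (x * B * xᵀ) *ᵥ v := by rw [← hv, ← mulVec_transpose, mulVec_mulVec]
    _ = c • (B *ᵥ v) := by rw [hxB]

theorem dotProduct_mulVec_eq_zero_of_isotropic [NoZeroDivisors R] (h2 : (2 : R) ≠ 0)
    {B : Matrix ι ι R} (hBsym : Bᵀ = B) {u v : ι → R} (hu : u ⬝ᵥ B *ᵥ u = 0) (hv : v ⬝ᵥ B *ᵥ v = 0)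
    (huv : (u + v) ⬝ᵥ B *ᵥ (u + v) = 0) : u ⬝ᵥ B *ᵥ v = 0 := by
  have hsym : v ⬝ᵥ B *ᵥ u = u ⬝ᵥ B *ᵥ v := by
    rw [dotProduct_mulVec, ← mulVec_transpose, hBsym, dotProduct_comm]
  rw [mulVec_add, add_dotProduct, dotProduct_add, dotProduct_add, hu, hv, hsym, zero_add, add_zero,
    ← two_mul] at huv
  exact (mul_eq_zero.mp huv).resolve_left h2

end LeftEigenvectors

open Polynomial in
-- A squarefree polynomial is radical, so `gcd (f ^ 2) (minpoly F a)` divides `f`.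
theorem exists_mul_sq_aeval_eq_aeval {F A : Type*} [Field F] [Ring A] [Algebra F A] {a : A}
    (hss : Squarefree (minpoly F a)) (f : F[X]) : ∃ b, b * aeval a f ^ 2 = aeval a f := by
  classical
  obtain ⟨k, hk⟩ : EuclideanDomain.gcd (f ^ 2) (minpoly F a) ∣ f :=
    (hss.squarefree_of_dvd (EuclideanDomain.gcd_dvd_right _ _)).isRadical 2 f
      (EuclideanDomain.gcd_dvd_left _ _)
  obtain ⟨g, h, hgcd⟩ : ∃ g h : F[X],
      EuclideanDomain.gcd (f ^ 2) (minpoly F a) = f ^ 2 * g + minpoly F a * h :=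
    ⟨_, _, EuclideanDomain.gcd_eq_gcd_ab _ _⟩
  have hf : f = k * g * f ^ 2 + k * h * minpoly F a := by
    linear_combination hk + k * hgcd
  refine ⟨aeval a (k * g), ?_⟩
  conv_rhs => rw [hf]
  rw [map_add, map_mul _ (k * h), minpoly.aeval, mul_zero, add_zero, map_mul _ (k * g), map_pow]

section Semisimple

variable {F ι : Type*} [Field F] [Fintype ι] [DecidableEq ι]

theorem eq_zero_of_orthogonal_left_eigenvectors {x : Matrix ι ι F}
    (hss : Squarefree (minpoly F x)) {c : F} {r : ι → F} (hr : x *ᵥ r = c • r)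
    (horth : ∀ u, u ᵥ* x = c • u → u ⬝ᵥ r = 0) : r = 0 := by
  obtain ⟨b, hb⟩ := exists_mul_sq_aeval_eq_aeval hss (Polynomial.X - Polynomial.C c)
  rw [map_sub, Polynomial.aeval_X, Polynomial.aeval_C, Algebra.algebraMap_eq_smul_one] at hb
  set N := x - c • (1 : Matrix ι ι F) with hN
  have hNr : N *ᵥ r = 0 := by
    rw [hN, sub_mulVec, hr, smul_mulVec, one_mulVec, sub_self]
  -- `e` is the projection onto the `c`-eigenspace along the range of `N`.
  let e : Matrix ι ι F := 1 - b * N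
  have heN : e * N = 0 := by rw [sub_mul, one_mul, mul_assoc, ← sq, hb, sub_self]
  have her : e *ᵥ r = r := by
    rw [sub_mulVec, one_mulVec, ← mulVec_mulVec, hNr, mulVec_zero, sub_zero]
  have hleft (w : ι → F) : (w ᵥ* e) ᵥ* x = c • (w ᵥ* e) := by
    have hw : (w ᵥ* e) ᵥ* N = 0 := by rw [vecMul_vecMul, heN, vecMul_zero]
    rwa [hN, vecMul_sub, vecMul_smul, vecMul_one, sub_eq_zero] at hw
  refine dotProduct_eq_zero r fun w => ?_
  rw [dotProduct_comm, ← her, dotProduct_mulVec]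
  exact horth _ (hleft w)

theorem exists_anisotropic_left_eigenvector (h2 : (2 : F) ≠ 0) {B x : Matrix ι ι F}
    (hB : IsUnit B) (hBsym : Bᵀ = B) (hxB : x * B * xᵀ = B) (hss : Squarefree (minpoly F x))
    {c : F} (hc : c * c = 1) (hex : ∃ v ≠ 0, v ᵥ* x = c • v) :
    ∃ v, v ᵥ* x = c • v ∧ v ⬝ᵥ B *ᵥ v ≠ 0 := by
  by_contra! hiso
  obtain ⟨v, hv0, hv⟩ := hex
  have horth (u : ι → F) (hu : u ᵥ* x = c • u) : u ⬝ᵥ B *ᵥ v = 0 :=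
    dotProduct_mulVec_eq_zero_of_isotropic h2 hBsym (hiso u hu) (hiso v hv)
      (hiso (u + v) (by rw [add_vecMul, hu, hv, smul_add]))
  have hBv : B *ᵥ v = 0 := eq_zero_of_orthogonal_left_eigenvectors hss
    (mulVec_mulVec_eq_smul_of_vecMul_eq_smul hxB hc hv) horth
  exact hv0 (mulVec_injective_of_isUnit hB (by rw [hBv, mulVec_zero]))

end Semisimple

section Reflection

variable {F ι : Type*} [Field F] [Fintype ι] [DecidableEq ι]

/-- The matrix of the reflection `w ↦ w - 2 (v ⬝ᵥ w) / (v ⬝ᵥ u) • u`, which negates `u` and fixes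
the hyperplane orthogonal to `v`. It is the identity when `v ⬝ᵥ u = 0`, by division by zero. -/
def reflectionMatrix (u v : ι → F) : Matrix ι ι F :=
  1 - (2 / (v ⬝ᵥ u)) • vecMulVec u v

theorem det_reflectionMatrix {u v : ι → F} (huv : v ⬝ᵥ u ≠ 0) :
    (reflectionMatrix u v).det = -1 := by
  rw [reflectionMatrix, sub_eq_add_neg, ← neg_smul, ← smul_vecMulVec, vecMulVec_eq Unit,
    det_one_add_replicateCol_mul_replicateRow, dotProduct_smul, smul_eq_mul, neg_mul,
    div_mul_cancel₀ _ huv]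
  ring

theorem reflectionMatrix_comm_of_eigenvectors {x : Matrix ι ι F} {c : F} {u v : ι → F}
    (hu : x *ᵥ u = c • u) (hv : v ᵥ* x = c • v) :
    x * reflectionMatrix u v = reflectionMatrix u v * x := by
  rw [reflectionMatrix, mul_sub, sub_mul, mul_smul_comm, smul_mul_assoc, mul_vecMulVec,
    vecMulVec_mul, hu, hv, smul_vecMulVec, vecMulVec_smul, mul_one, one_mul]

-- In the convention `y * B * yᵀ = B` it is `yᵀ` that is an isometry of the form `v ⬝ᵥ B *ᵥ w`, so
-- `y` is the transpose of the orthogonal reflection in `v`.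
theorem reflectionMatrix_mulVec_preserves {B : Matrix ι ι F} (hBsym : Bᵀ = B) {v : ι → F}
    (hv : v ⬝ᵥ B *ᵥ v ≠ 0) :
    reflectionMatrix (B *ᵥ v) v * B * (reflectionMatrix (B *ᵥ v) v)ᵀ = B := by
  have hvB : v ᵥ* B = B *ᵥ v := by rw [← mulVec_transpose, hBsym]
  set d := v ⬝ᵥ B *ᵥ v with hd
  set P := vecMulVec (B *ᵥ v) (B *ᵥ v) with hP
  have hleft : vecMulVec (B *ᵥ v) v * B = P := by rw [vecMulVec_mul, hvB]
  have hright : B * vecMulVec v (B *ᵥ v) = P := by rw [mul_vecMulVec]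
  have hboth : P * vecMulVec v (B *ᵥ v) = d • P := by
    rw [hP, vecMulVec_mul_vecMulVec, dotProduct_comm, ← hd, vecMulVec_smul]
  have hcoeff : 2 / d * (2 / d) * d = 2 / d + 2 / d := by
    rw [mul_assoc, div_mul_cancel₀ _ hv, mul_two]
  calc reflectionMatrix (B *ᵥ v) v * B * (reflectionMatrix (B *ᵥ v) v)ᵀ
      = (B - (2 / d) • P) * (1 - (2 / d) • vecMulVec v (B *ᵥ v)) := by
        rw [reflectionMatrix, sub_mul, one_mul, smul_mul_assoc, hleft, transpose_sub,
          transpose_one, transpose_smul, transpose_vecMulVec]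
    _ = B - (2 / d) • P - ((2 / d) • P - (2 / d * (2 / d) * d) • P) := by
        rw [mul_sub, mul_one, mul_smul_comm, sub_mul, hright, smul_mul_assoc, hboth, smul_sub,
          smul_smul, smul_smul]
    _ = B := by
        rw [hcoeff, add_smul]
        abel

end Reflection

theorem exists_commute_isometry_det_eq_neg_one {F ι : Type*} [Field F] [Fintype ι] [DecidableEq ι]
    (h2 : (2 : F) ≠ 0) {B x : Matrix ι ι F} (hB : IsUnit B) (hBsym : Bᵀ = B)
    (hxB : x * B * xᵀ = B) (hss : Squarefree (minpoly F x)) (hx : ¬ IsUnit (x ^ 2 - 1)) :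
    ∃ y : Matrix ι ι F, y * B * yᵀ = B ∧ x * y = y * x ∧ y.det = -1 := by
  rw [isUnit_iff_isUnit_det, isUnit_iff_ne_zero, not_not] at hx
  obtain ⟨c, hc, hex⟩ := exists_left_eigenvector_of_det_sq_sub_one_eq_zero hx
  obtain ⟨v, hvx, hv⟩ := exists_anisotropic_left_eigenvector h2 hB hBsym hxB hss hc hex
  exact ⟨reflectionMatrix (B *ᵥ v) v, reflectionMatrix_mulVec_preserves hBsym hv,
    reflectionMatrix_comm_of_eigenvectors (mulVec_mulVec_eq_smul_of_vecMul_eq_smul hxB hc hvx) hvx,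
    det_reflectionMatrix hv⟩

theorem semisimple_orthogonal_centralizer_det_neg_one_iff_general
    {F ι : Type*} [Field F] [Fintype ι] [DecidableEq ι] (h2 : (2 : F) ≠ 0) {B x : Matrix ι ι F}
    (hB : IsUnit B) (hBsym : Bᵀ = B) (hxB : x * B * xᵀ = B) (hss : Squarefree (minpoly F x)) :
    (∃ y : Matrix ι ι F, IsUnit y ∧ y * B * yᵀ = B ∧ x * y = y * x ∧ y.det = -1) ↔
      ¬ IsUnit (x ^ 2 - 1) := by
  constructor
  · rintro ⟨y, -, hyB, hxy, hdet⟩ hu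
    have hone : y.det = 1 :=
      det_eq_one_of_commute_of_isUnit_sq_sub_one h2.isUnit hB hBsym hxB hyB hxy hu
    exact h2 (by linear_combination hdet - hone)
  · intro hu
    obtain ⟨y, hyB, hxy, hdet⟩ := exists_commute_isometry_det_eq_neg_one h2 hB hBsym hxB hss hu
    refine ⟨y, ?_, hyB, hxy, hdet⟩
    rw [isUnit_iff_isUnit_det, hdet]
    exact isUnit_one.neg

/-- Let `x` be a semisimple element of an orthogonal group over a finite field of odd
order.  There exists an element of the orthogonal group commuting with `x` of determinant
`−1` if and only if `x² − I` is not invertible. -/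
theorem semisimple_orthogonal_centralizer_det_neg_one_iff
    {F : Type*} [Field F] [Fintype F] (hodd : Odd (Fintype.card F)) {n : ℕ}
    (B : Matrix (Fin n) (Fin n) F) (hB : IsUnit B) (hBsym : Bᵀ = B)
    (x : Matrix (Fin n) (Fin n) F) (hx : IsUnit x) (hxB : x * B * xᵀ = B)
    (hss : Squarefree (minpoly F x)) :
    (∃ y : Matrix (Fin n) (Fin n) F, IsUnit y ∧ y * B * yᵀ = B ∧
        x * y = y * x ∧ y.det = -1) ↔ ¬ IsUnit (x ^ 2 - 1) := by
  have h2 : ringChar F ≠ 2 := fun h =>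
    Nat.not_even_iff_odd.mpr hodd (Nat.even_iff.mpr (FiniteField.even_card_of_char_two h))
  exact semisimple_orthogonal_centralizer_det_neg_one_iff_general (Ring.two_ne_zero h2)
    hB hBsym hxB hss
end

section
/- Let F be a finite field of characteristic 2, let Q be a nonsingular quadratic form on F^n with polar form β_Q, and let X, Y be semisimple isometries of Q. Then the following are equivalent: (i) Y = g⁻¹·X·g for some isometry g of Q; (ii) Y = h⁻¹·X·h for some invertible h with β_Q(u·h, v·h) = β_Q(u,v) for all u,v (i.e. h in the symplectic group of β_Q); (iii) X and Y are similar (conjugate in GL(n,F)). -/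
open Matrix

/-!
Similar isometries `T`, `T'` of `Q` amount to one operator `T` that is an isometry of two equivalent
quadratic forms `Q`, `Q'`, and conjugacy in the orthogonal group to an isometry from `Q'` to `Q`
that commutes with `T`. The space is the orthogonal sum of the kernel and the range of `1 - T`. On
the range `Q (w - T w) = polar Q w (w - T w)`, so only the polar forms matter there. Writing that of
`Q'` as `polar Q (S u) v`, one wants an operator `g` commuting with `T` with `g* g = S`. The inverse
`c` of `1 - T` has adjoint `1 - c`, so that `g = p + c q` with `p`, `q` self-adjoint turns this into
`p ^ 2 + p q + c (1 - c) q ^ 2 = S`, which is solved in a commutative algebra of self-adjoint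
operators: modulo nilpotents `S` is a square because `F` is perfect, and Newton's method corrects
the error. On the kernel `T` is the identity, and Witt cancellation supplies an isometry.
-/

lemma injective_of_separatingLeft {K W W₁ : Type*} [CommRing K] [AddCommGroup W] [Module K W]
    [AddCommGroup W₁] [Module K W₁] {B : LinearMap.BilinForm K W} {B₁ : LinearMap.BilinForm K W₁}
    (hB : B.SeparatingLeft) {f : W →ₗ[K] W₁} {g : W → W₁}
    (h : ∀ u v, B₁ (f u) (g v) = B u v) : Function.Injective f := by
  rw [injective_iff_map_eq_zero]
  exact fun u hu ↦ hB u fun v ↦ by rw [← h, hu, map_zero, LinearMap.zero_apply]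

section ScaledIsometry

open Polynomial

lemma exists_isNilpotent_sub_pow (F : Type*) {A : Type*} [CommRing F] [CommRing A] [Algebra F A]
    [IsArtinian F A] (p : ℕ) [ExpChar F p] [PerfectRing F p] [ExpChar A p] (a : A) :
    ∃ b, IsNilpotent (a - b ^ p) := by
  have (n : ℕ) : RingHomSurjective (iterateFrobenius F p n) :=
    ⟨(bijective_iterateFrobenius F p n).surjective⟩
  -- The image of Frobenius is a submodule because `F` is perfect.
  let image (n : ℕ) : Submodule F A := LinearMap.range (LinearMap.iterateFrobenius F A p n)
  have image_anti : Antitone image := antitone_nat_of_succ_le fun n ↦ by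
    rintro _ ⟨x, rfl⟩
    exact ⟨x ^ p, by simp only [LinearMap.iterateFrobenius_def, ← pow_mul, ← pow_succ']⟩
  obtain ⟨n, hn⟩ := IsArtinian.monotone_stabilizes ⟨OrderDual.toDual ∘ image, image_anti⟩
  obtain ⟨b, hb⟩ : a ^ p ^ n ∈ image (n + 1) := by
    rw [← show image n = image (n + 1) from hn (n + 1) n.le_succ]
    exact ⟨a, rfl⟩
  rw [LinearMap.iterateFrobenius_def, pow_succ', pow_mul] at hb
  exact ⟨b, p ^ n, by rw [sub_pow_expChar_pow, hb, sub_self]⟩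

lemma exists_sq_add_mul_add_mul_sq_eq (F : Type*) {A : Type*} [Field F] [CharP F 2]
    [PerfectRing F 2] [CommRing A] [Algebra F A] [FiniteDimensional F A] {s : A}
    (hs : IsUnit s) (d : A) : ∃ x y : A, x ^ 2 + x * y + d * y ^ 2 = s := by
  cases subsingleton_or_nontrivial A
  · exact ⟨0, 0, Subsingleton.elim _ _⟩
  have : CharP A 2 := charP_of_injective_algebraMap (algebraMap F A).injective 2
  obtain ⟨x, hx⟩ := exists_isNilpotent_sub_pow F 2 s
  have hx_unit : IsUnit x := by
    rw [← isUnit_pow_iff two_ne_zero, ← sub_sub_self s (x ^ 2), sub_eq_add_neg]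
    exact hx.neg.isUnit_add_left_of_commute hs (Commute.all _ _)
  -- Modulo nilpotents `(x, 0)` is a solution, and Newton's method corrects `0`.
  obtain ⟨y, ⟨-, hy⟩, -⟩ := existsUnique_nilpotent_sub_and_aeval_eq_zero
    (P := C d * X ^ 2 + C x * X - C (s - x ^ 2)) (x := (0 : A))
    (by simpa [← isNilpotent_neg_iff (x := s - x ^ 2)] using hx)
    (by simpa [-map_sub, -map_pow] using hx_unit)
  simp only [coe_aeval_eq_eval, eval_sub, eval_add, eval_mul, eval_C, eval_pow, eval_X] at hy
  exact ⟨x, y, by linear_combination hy⟩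

lemma isUnit_of_isUnit_val {F E : Type*} [Field F] [Ring E] [Algebra F E] {A : Subalgebra F E}
    [FiniteDimensional F A] {a : A} (ha : IsUnit (a : E)) : IsUnit a := by
  have : IsArtinianRing A := isArtinian_of_tower F inferInstance
  exact IsArtinianRing.isUnit_of_mem_nonZeroDivisors <|
    comap_nonZeroDivisors_le_of_injective (f := A.val) Subtype.val_injective ha.mem_nonZeroDivisors

variable {F A W : Type*} [Field F] [CommRing A] [Algebra F A] [AddCommGroup W] [Module F W]
  [Module A W] [IsScalarTower F A W]

/-- The subalgebra of those elements of the commutative algebra `A` that act on the `A`-module `W`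
as self-adjoint operators for the bilinear form `B`. -/
def selfAdjointSubalgebra (A : Type*) [CommRing A] [Algebra F A] [Module A W]
    [IsScalarTower F A W] (B : LinearMap.BilinForm F W) : Subalgebra F A where
  carrier := {a | ∀ u v, B (a • u) v = B u (a • v)}
  mul_mem' {a b} ha hb u v := by rw [mul_smul, ha, hb, ← mul_smul, mul_comm]
  add_mem' {a b} ha hb u v := by simp only [add_smul, map_add, LinearMap.add_apply, ha u, hb u]
  algebraMap_mem' r u v := by simp only [algebraMap_smul, map_smul, LinearMap.smul_apply]

omit [Algebra F A] [IsScalarTower F A W] in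
/-- An isometry `t` has adjoint `t⁻¹`, and `(1 - t⁻¹)⁻¹ = 1 - (1 - t)⁻¹`. -/
lemma apply_smul_left_of_one_sub_mul_eq_one {B : LinearMap.BilinForm F W} {t c : A}
    (ht : ∀ u v, B (t • u) (t • v) = B u v) (hc : (1 - t) * c = 1) (u v : W) :
    B (c • u) v = B u ((1 - c) • v) := by
  have sub_eq (w : W) : c • w - t • c • w = w := by
    rw [smul_smul t, ← sub_smul, ← one_sub_mul, hc, one_smul]
  calc B (c • u) v = B (c • u) (c • v - t • c • v) := by rw [sub_eq]
    _ = B (c • u - t • c • u) (-(t • c • v)) := by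
      simp only [map_sub, map_neg, LinearMap.sub_apply, ht]; ring
    _ = B u ((1 - c) • v) := by
      rw [sub_eq, sub_smul, one_smul, ← sub_sub_cancel_left (c • v), sub_eq]

lemma exists_smul_smul_eq [CharP F 2] [PerfectRing F 2] [FiniteDimensional F A]
    {B : LinearMap.BilinForm F W} {s t : A}
    (ht : ∀ u v, B (t • u) (t • v) = B u v) (ht1 : IsUnit (1 - t)) (hs : IsUnit s)
    (hsB : s ∈ selfAdjointSubalgebra A B) :
    ∃ g : A, ∀ u v, B (g • u) (g • v) = B (s • u) v := by
  obtain ⟨c, hc⟩ := ht1.exists_right_inv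
  have c_left := apply_smul_left_of_one_sub_mul_eq_one ht hc
  have c_right (u v : W) : B u (c • v) = B ((1 - c) • u) v := by
    simp only [sub_smul, one_smul, map_sub, LinearMap.sub_apply, c_left, sub_sub_cancel]
  have d_mem : c * (1 - c) ∈ selfAdjointSubalgebra A B := fun u v ↦ by
    rw [mul_smul, c_left, ← c_right, ← mul_smul]
  obtain ⟨⟨p, hp⟩, ⟨q, hq⟩, hpq⟩ := exists_sq_add_mul_add_mul_sq_eq F
    (isUnit_of_isUnit_val (a := ⟨s, hsB⟩) hs) ⟨c * (1 - c), d_mem⟩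
  have hpq : p ^ 2 + p * q + c * (1 - c) * q ^ 2 = s := congr(($hpq : A))
  have g_left (u v : W) : B ((p + c * q) • u) v = B u ((p + (1 - c) * q) • v) := by
    simp only [add_smul, mul_comm (1 - c), mul_smul, map_add, LinearMap.add_apply, hp u, hq u,
      c_left]
  refine ⟨p + c * q, fun u v ↦ ?_⟩
  rw [g_left, hsB, ← mul_smul, ← hpq]
  ring_nf

open scoped IsMulCommutative in
lemma exists_commute_isometry_of_isUnit_one_sub [FiniteDimensional F W] [CharP F 2]
    [PerfectRing F 2] {B B' : LinearMap.BilinForm F W} (hB : B.Nondegenerate)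
    (hB' : B'.Nondegenerate) (hB_symm : B.IsSymm) (hB'_symm : B'.IsSymm) {T : Module.End F W}
    (hT : ∀ u v, B (T u) (T v) = B u v) (hT' : ∀ u v, B' (T u) (T v) = B' u v)
    (hT1 : IsUnit (1 - T)) :
    ∃ g : W ≃ₗ[F] W, (∀ w, g (T w) = T (g w)) ∧ ∀ u v, B (g u) (g v) = B' u v := by
  let S : Module.End F W := LinearMap.BilinForm.symmCompOfNondegenerate B' B hB
  have S_left (u v : W) : B (S u) v = B' u v :=
    LinearMap.BilinForm.symmCompOfNondegenerate_left_apply B' hB v u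
  have S_unit : IsUnit S := LinearMap.isUnit_iff_ker_eq_bot S |>.2 <|
    LinearMap.ker_eq_bot.2 (injective_of_separatingLeft hB'.1 S_left)
  have T_surj : Function.Surjective T := LinearMap.surjective_of_injective <|
    injective_of_separatingLeft hB.1 hT
  have S_comm : Commute S T := by
    ext u
    refine LinearMap.ker_eq_bot.1 hB.ker_eq_bot (LinearMap.ext <| T_surj.forall.2 fun v ↦ ?_)
    simp only [Module.End.mul_apply, S_left, hT, hT']
  let A := Algebra.adjoin F {S, T}
  have : IsMulCommutative A := Algebra.isMulCommutative_adjoin _ <| by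
    rintro x (rfl | rfl) y (rfl | rfl)
    exacts [rfl, S_comm, S_comm.symm, rfl]
  let s : A := ⟨S, Algebra.subset_adjoin (by simp)⟩
  let t : A := ⟨T, Algebra.subset_adjoin (by simp)⟩
  obtain ⟨g, hg⟩ := exists_smul_smul_eq (B := B) (s := s) (t := t) hT
    (isUnit_of_isUnit_val hT1) (isUnit_of_isUnit_val S_unit) fun u v ↦ by
      rw [hB_symm.eq u]
      exact (S_left u v).trans <| (hB'_symm.eq u v).trans (S_left v u).symm
  have g_isometry (u v : W) : B ((g : Module.End F W) u) ((g : Module.End F W) v) = B' u v :=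
    (hg u v).trans (S_left u v)
  exact ⟨.ofInjectiveEndo g (injective_of_separatingLeft hB'.1 g_isometry),
    fun w ↦ congr($(mul_comm g t).1 w), g_isometry⟩

end ScaledIsometry

section WittCancellation

open QuadraticMap QuadraticForm

variable {K V V₁ V₂ : Type*} [Field K] [AddCommGroup V] [Module K V] [AddCommGroup V₁]
  [Module K V₁] [AddCommGroup V₂] [Module K V₂] {Q : QuadraticForm K V} {Q₁ : QuadraticForm K V₁}
  {Q₂ : QuadraticForm K V₂}

/-- The orthogonal complement, for the polar form of `Q`, of a pair of vectors. It is used for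
hyperbolic pairs, that is, for `Q e = 0` and `polar Q e f ≠ 0`. -/
def pairOrtho (Q : QuadraticForm K V) (e f : V) : Submodule K V :=
  LinearMap.ker (polarBilin Q e) ⊓ LinearMap.ker (polarBilin Q f)

lemma mem_pairOrtho {e f v : V} : v ∈ pairOrtho Q e f ↔ polar Q e v = 0 ∧ polar Q f v = 0 :=
  Iff.rfl

lemma pairOrtho_comm (e f : V) : pairOrtho Q e f = pairOrtho Q f e :=
  inf_comm _ _

lemma polar_self_of_apply_eq_zero {e : V} (he : Q e = 0) : polar Q e e = 0 := by
  rw [polar_self, he, smul_zero]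

lemma map_sub_smul_of_apply_eq_zero {e : V} (he : Q e = 0) (v : V) (a : K) :
    Q (v - a • e) = Q v - a * polar Q e v := by
  rw [sub_eq_add_neg, ← neg_smul, QuadraticMap.map_add Q, QuadraticMap.map_smul, he,
    polar_smul_right, polar_comm, smul_zero, add_zero, neg_smul, smul_eq_mul, sub_eq_add_neg]

/-- The projection along `e` onto the polar-orthogonal complement of `f`, when `polar Q e f ≠ 0`. -/
def orthoProj (Q : QuadraticForm K V) (e f : V) : V →ₗ[K] V :=
  LinearMap.id - ((polar Q e f)⁻¹ • polarBilin Q f).smulRight e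

lemma orthoProj_apply (e f v : V) :
    orthoProj Q e f v = v - ((polar Q e f)⁻¹ * polar Q f v) • e :=
  rfl

lemma map_orthoProj {e : V} (he : Q e = 0) (f : V) {v : V} (hv : polar Q e v = 0) :
    Q (orthoProj Q e f v) = Q v := by
  rw [orthoProj_apply, map_sub_smul_of_apply_eq_zero he, hv, mul_zero, sub_zero]

lemma orthoProj_mem_pairOrtho {e f v : V} (he : Q e = 0) (hef : polar Q e f ≠ 0)
    (hv : polar Q e v = 0) : orthoProj Q e f v ∈ pairOrtho Q e f := by
  simp only [mem_pairOrtho, orthoProj_apply, polar_sub_right, polar_smul_right, hv,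
    polar_self_of_apply_eq_zero he, polar_comm Q f e, smul_eq_mul]
  exact ⟨by ring, by field_simp; ring⟩

lemma orthoProj_orthoProj {e f v : V} (hef : polar Q e f ≠ 0) (f' : V)
    (hv : v ∈ pairOrtho Q e f) : orthoProj Q e f (orthoProj Q e f' v) = v := by
  have hfv : polar Q f v = 0 := hv.2
  rw [orthoProj_apply e f, orthoProj_apply e f', polar_sub_right, polar_smul_right, hfv,
    polar_comm Q f e, zero_sub, smul_eq_mul, mul_neg, mul_comm _ (polar Q e f),
    inv_mul_cancel_left₀ hef, neg_smul, sub_neg_eq_add, sub_add_cancel]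

/-- Both sides are copies of `e^⊥ / e`. -/
lemma equivalent_restrict_pairOrtho_right {e f f' : V} (he : Q e = 0) (hef : polar Q e f ≠ 0)
    (hef' : polar Q e f' ≠ 0) :
    (Q.restrict (pairOrtho Q e f)).Equivalent (Q.restrict (pairOrtho Q e f')) := by
  let toFun := (orthoProj Q e f').restrict fun v (hv : v ∈ pairOrtho Q e f) ↦
    orthoProj_mem_pairOrtho he hef' hv.1
  let invFun := (orthoProj Q e f).restrict fun v (hv : v ∈ pairOrtho Q e f') ↦
    orthoProj_mem_pairOrtho he hef hv.1
  refine ⟨⟨.ofLinearMap toFun invFun ?_ ?_, fun v ↦ map_orthoProj he f' v.2.1⟩⟩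
  · exact LinearMap.ext fun v ↦ Subtype.ext (orthoProj_orthoProj hef' f v.2)
  · exact LinearMap.ext fun v ↦ Subtype.ext (orthoProj_orthoProj hef f' v.2)

lemma equivalent_restrict_pairOrtho_left {e e' f : V} (hf : Q f = 0) (hef : polar Q e f ≠ 0)
    (hef' : polar Q e' f ≠ 0) :
    (Q.restrict (pairOrtho Q e f)).Equivalent (Q.restrict (pairOrtho Q e' f)) := by
  rw [pairOrtho_comm e, pairOrtho_comm e']
  exact equivalent_restrict_pairOrtho_right hf (by rwa [polar_comm]) (by rwa [polar_comm])

lemma exists_polar_ne_zero_and_polar_ne_zero {e f e' f' : V} (hef : polar Q e f ≠ 0)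
    (hef' : polar Q e' f' ≠ 0) : ∃ x, polar Q e x ≠ 0 ∧ polar Q e' x ≠ 0 := by
  by_cases he'f : polar Q e' f = 0
  · by_cases hf' : polar Q e f' = 0
    · exact ⟨f + f', by rwa [polar_add_right, hf', add_zero],
        by rwa [polar_add_right, he'f, zero_add]⟩
    · exact ⟨f', hf', hef'⟩
  · exact ⟨f, hef, he'f⟩

lemma exists_apply_eq_zero_and_polar_ne_zero {e f e' f' : V} (he : Q e = 0)
    (hef : polar Q e f ≠ 0) (hef' : polar Q e' f' ≠ 0) (hee' : polar Q e e' = 0) :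
    ∃ y, Q y = 0 ∧ polar Q e y ≠ 0 ∧ polar Q e' y ≠ 0 := by
  obtain ⟨x, hx, hx'⟩ := exists_polar_ne_zero_and_polar_ne_zero hef hef'
  refine ⟨x - (Q x / polar Q e x) • e, ?_, ?_, ?_⟩
  · rw [map_sub_smul_of_apply_eq_zero he, div_mul_cancel₀ _ hx, sub_self]
  · rwa [polar_sub_right, polar_smul_right, polar_self_of_apply_eq_zero he, smul_zero, sub_zero]
  · rwa [polar_sub_right, polar_smul_right, polar_comm Q e' e, hee', smul_zero, sub_zero]

lemma equivalent_restrict_pairOrtho {e f e' f' : V} (he : Q e = 0) (hef : polar Q e f ≠ 0)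
    (he' : Q e' = 0) (hef' : polar Q e' f' ≠ 0) :
    (Q.restrict (pairOrtho Q e f)).Equivalent (Q.restrict (pairOrtho Q e' f')) := by
  by_cases hee' : polar Q e e' = 0
  · obtain ⟨y, hy, hey, hey'⟩ := exists_apply_eq_zero_and_polar_ne_zero he hef hef' hee'
    exact (equivalent_restrict_pairOrtho_right he hef hey).trans <|
      (equivalent_restrict_pairOrtho_left hy hey hey').trans <|
      equivalent_restrict_pairOrtho_right he' hey' hef'
  · rw [pairOrtho_comm e' f']
    exact (equivalent_restrict_pairOrtho_right he hef hee').trans <|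
      equivalent_restrict_pairOrtho_left he' hee' (by rwa [polar_comm])

lemma polar_map_map {G : Type*} [FunLike G V₁ V₂] [AddMonoidHomClass G V₁ V₂] {φ : G}
    (hφ : ∀ v, Q₂ (φ v) = Q₁ v) (u v : V₁) : polar Q₂ (φ u) (φ v) = polar Q₁ u v := by
  simp only [polar, ← map_add, hφ]

lemma comap_pairOrtho (φ : Q₁.IsometryEquiv Q₂) (e f : V₁) :
    (pairOrtho Q₂ (φ e) (φ f)).comap φ.toLinearEquiv.toLinearMap = pairOrtho Q₁ e f := by
  ext v
  simp only [mem_pairOrtho, ← polar_map_map φ.map_app]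
  rfl

lemma equivalent_restrict_pairOrtho_map (φ : Q₁.IsometryEquiv Q₂) (e f : V₁) :
    (Q₁.restrict (pairOrtho Q₁ e f)).Equivalent (Q₂.restrict (pairOrtho Q₂ (φ e) (φ f))) := by
  rw [← comap_pairOrtho φ]
  exact ⟨⟨φ.toLinearEquiv.ofSubmodule' _, fun v ↦ φ.map_app v⟩⟩

lemma mem_pairOrtho_prod_dualProd {v : V₁ × Module.Dual K K × K} :
    v ∈ pairOrtho (Q₁.prod (dualProd K K)) (0, LinearMap.id, 0) (0, 0, 1) ↔ v.2 = 0 := by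
  simp [mem_pairOrtho, polar, Prod.ext_iff, LinearMap.ext_ring_iff, and_comm]

lemma equivalent_restrict_pairOrtho_prod_dualProd (Q₁ : QuadraticForm K V₁) :
    Q₁.Equivalent ((Q₁.prod (dualProd K K)).restrict
      (pairOrtho (Q₁.prod (dualProd K K)) (0, LinearMap.id, 0) (0, 0, 1))) := by
  refine ⟨⟨.ofLinearMap ((LinearMap.inl K V₁ _).codRestrict _ fun v ↦
    mem_pairOrtho_prod_dualProd.2 rfl) (LinearMap.fst K V₁ _ ∘ₗ Submodule.subtype _) ?_ rfl,
    fun v ↦ ?_⟩⟩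
  · refine LinearMap.ext fun v ↦ Subtype.ext (Prod.ext rfl ?_)
    exact (mem_pairOrtho_prod_dualProd.1 v.2).symm
  · change Q₁ v + dualProd K K 0 = Q₁ v
    rw [QuadraticMap.map_zero, add_zero]

lemma equivalent_of_prod_dualProd_self
    (h : (Q₁.prod (dualProd K K)).Equivalent (Q₂.prod (dualProd K K))) : Q₁.Equivalent Q₂ := by
  obtain ⟨φ⟩ := h
  refine (equivalent_restrict_pairOrtho_prod_dualProd Q₁).trans <|
    (equivalent_restrict_pairOrtho_map φ _ _).trans <|
    (equivalent_restrict_pairOrtho ?_ ?_ ?_ ?_).trans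
      (equivalent_restrict_pairOrtho_prod_dualProd Q₂).symm
  · simp
  · rw [polar_map_map φ.map_app]
    simp [polar]
  · simp
  · simp [polar]

lemma equivalent_prod_assoc (Q : QuadraticForm K V) (Q₁ : QuadraticForm K V₁)
    (Q₂ : QuadraticForm K V₂) : ((Q.prod Q₁).prod Q₂).Equivalent (Q.prod (Q₁.prod Q₂)) :=
  ⟨⟨LinearEquiv.prodAssoc K V V₁ V₂, fun _ ↦ (add_assoc _ _ _).symm⟩⟩

lemma equivalent_prod_of_subsingleton [Subsingleton V₁] (Q : QuadraticForm K V)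
    (Q₁ : QuadraticForm K V₁) : (Q.prod Q₁).Equivalent Q := by
  have : Unique V₁ := uniqueOfSubsingleton 0
  refine ⟨⟨LinearEquiv.prodUnique, fun v ↦ ?_⟩⟩
  rw [QuadraticMap.prod_apply, Subsingleton.elim v.2 0, QuadraticMap.map_zero, add_zero]
  rfl

lemma equivalent_prod_dualProd_fin_succ (Q : QuadraticForm K V) (k : ℕ) :
    (Q.prod (dualProd K (Fin (k + 1) → K))).Equivalent
      ((Q.prod (dualProd K (Fin k → K))).prod (dualProd K K)) := by
  have split : (dualProd K (Fin (k + 1) → K)).Equivalent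
      ((dualProd K (Fin k → K)).prod (dualProd K K)) :=
    ⟨(dualProdIsometry (Fin.consLinearEquiv K fun _ ↦ K)).symm.trans <|
      dualProdProdIsometry.trans <| IsometryEquiv.prodComm _ _⟩
  exact (Equivalent.prod (.refl Q) split).trans (equivalent_prod_assoc _ _ _).symm

lemma equivalent_of_prod_dualProd_fin (k : ℕ)
    (h : (Q₁.prod (dualProd K (Fin k → K))).Equivalent (Q₂.prod (dualProd K (Fin k → K)))) :
    Q₁.Equivalent Q₂ := by
  induction k with
  | zero =>
    exact (equivalent_prod_of_subsingleton Q₁ _).symm.trans <|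
      h.trans (equivalent_prod_of_subsingleton Q₂ _)
  | succ k ih =>
    exact ih <| equivalent_of_prod_dualProd_self <|
      (equivalent_prod_dualProd_fin_succ Q₁ k).symm.trans <|
      h.trans (equivalent_prod_dualProd_fin_succ Q₂ k)

lemma equivalent_of_prod_dualProd [FiniteDimensional K V]
    (h : (Q₁.prod (dualProd K V)).Equivalent (Q₂.prod (dualProd K V))) : Q₁.Equivalent Q₂ := by
  have coords : (dualProd K V).Equivalent (dualProd K (Fin (Module.finrank K V) → K)) :=
    ⟨dualProdIsometry (Module.finBasis K V).equivFun⟩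
  exact equivalent_of_prod_dualProd_fin _ <| (Equivalent.prod (.refl Q₁) coords.symm).trans <|
    h.trans (.prod (.refl Q₂) coords)

lemma equivalent_prod_neg_dualProd [FiniteDimensional K V]
    (hQ : Q.polarBilin.SeparatingLeft) : (Q.prod (-Q)).Equivalent (dualProd K V) := by
  obtain ⟨B, rfl⟩ := LinearMap.BilinMap.toQuadraticMap_surjective Q
  -- `B x x - B y y = (B x + B.flip y) (x - y)`
  let φ : V × V →ₗ[K] Module.Dual K V × V :=
    (B.coprod B.flip).prod (LinearMap.id.coprod (-LinearMap.id))
  have φ_inj : Function.Injective φ := by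
    refine (injective_iff_map_eq_zero φ).2 fun ⟨x, y⟩ h ↦ ?_
    obtain ⟨h₁, h₂⟩ : B x + B.flip y = 0 ∧ x + -y = 0 := Prod.mk.inj h
    obtain rfl : x = y := by rwa [← sub_eq_add_neg, sub_eq_zero] at h₂
    obtain rfl : x = 0 := hQ x fun u ↦ by
      simpa [LinearMap.BilinMap.polar_toQuadraticMap] using congr($h₁ u)
    rfl
  refine ⟨⟨.ofInjectiveOfFinrankEq φ φ_inj ?_, fun ⟨x, y⟩ ↦ ?_⟩⟩
  · simp only [Module.finrank_prod, Subspace.dual_finrank_eq]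
  · change (B x + B.flip y) (x + -y) = B x x + -B y y
    simp only [map_add, map_neg, LinearMap.add_apply, LinearMap.flip_apply]
    ring

lemma equivalent_prod_prod_neg [FiniteDimensional K V] (Q₁ : QuadraticForm K V₁)
    (hQ : Q.polarBilin.SeparatingLeft) :
    ((Q₁.prod Q).prod (-Q)).Equivalent (Q₁.prod (dualProd K V)) :=
  (equivalent_prod_assoc _ _ _).trans <| .prod (.refl Q₁) (equivalent_prod_neg_dualProd hQ)

theorem witt_cancellation [FiniteDimensional K V] (hQ : Q.polarBilin.SeparatingLeft)
    (h : (Q₁.prod Q).Equivalent (Q₂.prod Q)) : Q₁.Equivalent Q₂ :=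
  equivalent_of_prod_dualProd <| (equivalent_prod_prod_neg Q₁ hQ).symm.trans <|
    (h.prod (.refl (-Q))).trans (equivalent_prod_prod_neg Q₂ hQ)

end WittCancellation

section CommutingIsometry

open QuadraticMap

variable {F V V₁ : Type*} [Field F] [AddCommGroup V] [Module F V] [AddCommGroup V₁] [Module F V₁]
  {Q Q' : QuadraticForm F V} {T : Module.End F V} {p q : Submodule F V}

lemma nondegenerate_polarBilin (hQ : Q.polarBilin.SeparatingLeft) : Q.polarBilin.Nondegenerate :=
  LinearMap.IsRefl.nondegenerate_iff_separatingLeft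
    (fun u v h ↦ (polar_comm Q v u).trans h) |>.2 hQ

lemma separatingLeft_of_isometryEquiv {Q₁ : QuadraticForm F V₁} (φ : Q₁.IsometryEquiv Q)
    (hQ : Q.polarBilin.SeparatingLeft) : Q₁.polarBilin.SeparatingLeft := by
  refine fun u hu ↦ φ.toLinearEquiv.map_eq_zero_iff.1 <| hQ _ <| φ.surjective.forall.2 fun v ↦ ?_
  exact (polar_map_map φ.map_app u v).trans (hu v)

lemma separatingLeft_restrict (hpq : Codisjoint p q) (ho : ∀ u ∈ p, ∀ v ∈ q, polar Q u v = 0)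
    (hQ : Q.polarBilin.SeparatingLeft) : (Q.restrict q).polarBilin.SeparatingLeft := by
  refine fun v hv ↦ Subtype.ext <| hQ v fun u ↦ ?_
  obtain ⟨a, b, ha, hb, rfl⟩ := Submodule.codisjoint_iff_exists_add_eq.1 hpq u
  rw [map_add, polarBilin_apply_apply, polar_comm, ho a ha v v.2, zero_add]
  exact hv ⟨b, hb⟩

/-- The orthogonal decomposition of `Q` along complementary polar-orthogonal subspaces. -/
noncomputable def restrictProdIsometryEquiv (hpq : IsCompl p q)
    (ho : ∀ u ∈ p, ∀ v ∈ q, polar Q u v = 0) :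
    ((Q.restrict p).prod (Q.restrict q)).IsometryEquiv Q where
  toLinearEquiv := Submodule.prodEquivOfIsCompl p q hpq
  map_app' v := by
    refine (QuadraticMap.map_add Q (v.1 : V) v.2).trans ?_
    rw [ho v.1 v.1.2 v.2 v.2.2, add_zero]
    rfl

lemma polar_eq_zero_of_mem_ker_of_mem_range (hT : ∀ v, Q (T v) = Q v) :
    ∀ u ∈ LinearMap.ker (1 - T), ∀ v ∈ LinearMap.range (1 - T), polar Q u v = 0 := by
  rintro u hu _ ⟨v, rfl⟩
  have hu : u = T u := sub_eq_zero.1 hu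
  rw [LinearMap.sub_apply, Module.End.one_apply, polar_sub_right]
  nth_rw 2 [hu]
  rw [polar_map_map hT, sub_self]

lemma apply_one_sub_of_isometry (hT : ∀ v, Q (T v) = Q v) (v : V) :
    Q ((1 - T) v) = polar Q v ((1 - T) v) := by
  rw [LinearMap.sub_apply, Module.End.one_apply, polar_sub_right, polar_self, sub_eq_add_neg,
    QuadraticMap.map_add Q, polar_neg_right, QuadraticMap.map_neg, hT, two_nsmul, sub_eq_add_neg]

lemma exists_isometryEquiv_commute_of_isUnit_one_sub [CharP F 2] [PerfectRing F 2]
    [FiniteDimensional F V] (hQ : Q.polarBilin.SeparatingLeft)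
    (hQ' : Q'.polarBilin.SeparatingLeft) (hT : ∀ v, Q (T v) = Q v) (hT' : ∀ v, Q' (T v) = Q' v)
    (hT1 : IsUnit (1 - T)) : ∃ g : Q'.IsometryEquiv Q, ∀ v, g (T v) = T (g v) := by
  obtain ⟨g, hgT, hg⟩ := exists_commute_isometry_of_isUnit_one_sub (nondegenerate_polarBilin hQ)
    (nondegenerate_polarBilin hQ') ⟨polar_comm Q⟩ ⟨polar_comm Q'⟩ (polar_map_map hT)
    (polar_map_map hT') hT1
  have g_one_sub (v : V) : g ((1 - T) v) = (1 - T) (g v) := by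
    simp only [LinearMap.sub_apply, Module.End.one_apply, map_sub, hgT]
  have one_sub_surj := ((Module.End.isUnit_iff _).1 hT1).surjective
  refine ⟨⟨g, one_sub_surj.forall.2 fun v ↦ ?_⟩, hgT⟩
  calc Q (g ((1 - T) v)) = polar Q (g v) (g ((1 - T) v)) := by
        rw [g_one_sub, apply_one_sub_of_isometry hT]
    _ = Q' ((1 - T) v) := (hg v _).trans (apply_one_sub_of_isometry hT' v).symm

lemma apply_mem_range_one_sub (T : Module.End F V) :
    ∀ v ∈ LinearMap.range (1 - T), T v ∈ LinearMap.range (1 - T) := by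
  rintro _ ⟨v, rfl⟩
  exact ⟨T v, by simp⟩

lemma isUnit_one_sub_restrict_range [FiniteDimensional F V]
    (h : Disjoint (LinearMap.ker (1 - T)) (LinearMap.range (1 - T))) :
    IsUnit (1 - T.restrict (apply_mem_range_one_sub T)) := by
  rw [LinearMap.isUnit_iff_ker_eq_bot, LinearMap.ker_eq_bot']
  exact fun v hv ↦ Subtype.ext <| Submodule.disjoint_def.1 h v (congrArg Subtype.val hv) v.2

lemma exists_isometryEquiv_commute_of_restrict (hT : ∀ v, Q (T v) = Q v)
    (hT' : ∀ v, Q' (T v) = Q' v) (h : IsCompl (LinearMap.ker (1 - T)) (LinearMap.range (1 - T)))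
    (f : (Q'.restrict (LinearMap.ker (1 - T))).IsometryEquiv (Q.restrict (LinearMap.ker (1 - T))))
    (g : (Q'.restrict (LinearMap.range (1 - T))).IsometryEquiv
      (Q.restrict (LinearMap.range (1 - T))))
    (hg : ∀ v, g (T.restrict (apply_mem_range_one_sub T) v) =
      T.restrict (apply_mem_range_one_sub T) (g v)) :
    ∃ φ : Q'.IsometryEquiv Q, ∀ v, φ (T v) = T (φ v) := by
  let split := restrictProdIsometryEquiv h (polar_eq_zero_of_mem_ker_of_mem_range hT)
  let split' := restrictProdIsometryEquiv h (polar_eq_zero_of_mem_ker_of_mem_range hT')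
  let φ := split'.symm.trans ((f.prod g).trans split)
  have φ_add (a : LinearMap.ker (1 - T)) (b : LinearMap.range (1 - T)) :
      φ ((a : V) + (b : V)) = (f a : V) + (g b : V) :=
    congrArg (fun x ↦ split (f.prod g x)) (split'.toLinearEquiv.symm_apply_apply (a, b))
  have T_ker (a : LinearMap.ker (1 - T)) : T (a : V) = a :=
    (sub_eq_zero.1 (LinearMap.mem_ker.1 a.2 : (a : V) - T a = 0)).symm
  refine ⟨φ, split'.surjective.forall.2 fun ⟨a, b⟩ ↦ ?_⟩
  calc
    φ (T ((a : V) + (b : V))) = φ ((a : V) + (T.restrict (apply_mem_range_one_sub T) b : V)) := by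
      rw [map_add, T_ker]; rfl
    _ = (f a : V) + T (g b : V) := by rw [φ_add, hg]; rfl
    _ = T (φ ((a : V) + (b : V))) := by rw [φ_add, map_add, T_ker]

theorem exists_isometryEquiv_commute_of_isCompl [CharP F 2] [PerfectRing F 2]
    [FiniteDimensional F V] (hQ : Q.polarBilin.SeparatingLeft) (hQQ' : Q'.Equivalent Q)
    (hT : ∀ v, Q (T v) = Q v) (hT' : ∀ v, Q' (T v) = Q' v)
    (h : IsCompl (LinearMap.ker (1 - T)) (LinearMap.range (1 - T))) :
    ∃ φ : Q'.IsometryEquiv Q, ∀ v, φ (T v) = T (φ v) := by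
  have ho := polar_eq_zero_of_mem_ker_of_mem_range hT
  have ho' := polar_eq_zero_of_mem_ker_of_mem_range hT'
  have hQ' := separatingLeft_of_isometryEquiv hQQ'.some hQ
  have hQ_range := separatingLeft_restrict h.codisjoint ho hQ
  obtain ⟨g, hg⟩ := exists_isometryEquiv_commute_of_isUnit_one_sub hQ_range
    (separatingLeft_restrict h.codisjoint ho' hQ') (fun v ↦ hT v) (fun v ↦ hT' v)
    (isUnit_one_sub_restrict_range h.disjoint)
  obtain ⟨f⟩ : (Q'.restrict (LinearMap.ker (1 - T))).Equivalent
      (Q.restrict (LinearMap.ker (1 - T))) :=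
    witt_cancellation hQ_range <| .trans (.prod (.refl _) (.symm ⟨g⟩)) <|
      .trans ⟨restrictProdIsometryEquiv h ho'⟩ <| hQQ'.trans
        (.symm ⟨restrictProdIsometryEquiv h ho⟩)
  exact exists_isometryEquiv_commute_of_restrict hT hT' h f g hg

theorem exists_isometryEquiv_conj_of_similar [CharP F 2] [PerfectRing F 2]
    [FiniteDimensional F V] (hQ : Q.polarBilin.SeparatingLeft) {T' : Module.End F V}
    (hT : ∀ v, Q (T v) = Q v) (hT' : ∀ v, Q (T' v) = Q v)
    (h : IsCompl (LinearMap.ker (1 - T)) (LinearMap.range (1 - T))) (P : V ≃ₗ[F] V)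
    (hP : ∀ v, P (T v) = T' (P v)) :
    ∃ g : Q.IsometryEquiv Q, ∀ v, g (T v) = T' (g v) := by
  let π : (Q.comp P.toLinearMap).IsometryEquiv Q := ⟨P, fun _ ↦ rfl⟩
  have T_isometry (v : V) : Q.comp P.toLinearMap (T v) = Q.comp P.toLinearMap v := by
    simp only [QuadraticMap.comp_apply, LinearEquiv.coe_coe, hP, hT']
  obtain ⟨φ, hφ⟩ := exists_isometryEquiv_commute_of_isCompl hQ ⟨π⟩ hT T_isometry h
  refine ⟨φ.symm.trans π, φ.surjective.forall.2 fun v ↦ ?_⟩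
  rw [show T (φ.toLinearEquiv v) = φ.toLinearEquiv (T v) from (hφ v).symm]
  exact (congrArg P (φ.toLinearEquiv.symm_apply_apply (T v))).trans <| (hP v).trans <|
    congrArg (T' ∘ P) (φ.toLinearEquiv.symm_apply_apply v).symm

lemma isCompl_ker_range_of_apply_apply [FiniteDimensional F V] {f : Module.End F V}
    (hf : ∀ v, f (f v) = 0 → f v = 0) : IsCompl (LinearMap.ker f) (LinearMap.range f) := by
  have disjoint : Disjoint (LinearMap.ker f) (LinearMap.range f) := by
    rw [Submodule.disjoint_def]
    rintro _ h ⟨v, rfl⟩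
    exact hf v h
  refine ⟨disjoint, codisjoint_iff.2 <| Submodule.eq_top_of_disjoint _ _ ?_ disjoint⟩
  rw [add_comm, LinearMap.finrank_range_add_finrank_ker]

end CommutingIsometry

section Matrices

open Polynomial in
lemma exists_aeval_sq_mul_eq {F A : Type*} [Field F] [Ring A] [Algebra F A] {a : A} {p : F[X]}
    (hp : Irreducible p) (hpa : ¬ p ^ 2 ∣ minpoly F a) :
    ∃ b, aeval a p ^ 2 * b = aeval a p := by
  obtain ⟨r, hpr, hr⟩ : ∃ r, IsCoprime p r ∧ minpoly F a ∣ p * r := by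
    by_cases hdvd : p ∣ minpoly F a
    · obtain ⟨r, hr⟩ := hdvd
      refine ⟨r, hp.coprime_iff_not_dvd.2 fun h ↦ hpa ?_, hr.dvd⟩
      rw [hr, sq]
      exact mul_dvd_mul_left p h
    · exact ⟨minpoly F a, hp.coprime_iff_not_dvd.2 hdvd, dvd_mul_left _ _⟩
  obtain ⟨u, v, huv⟩ := hpr
  have aeval_mul : aeval a (p * r) = 0 := (minpoly.dvd_iff).1 hr
  refine ⟨aeval a u, ?_⟩
  calc aeval a p ^ 2 * aeval a u = aeval a (p * (u * p + v * r) - v * (p * r)) := by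
        rw [← map_pow, ← map_mul]; congr 1; ring
    _ = aeval a p := by rw [huv, mul_one, map_sub, map_mul _ v, aeval_mul, mul_zero, sub_zero]

variable {F n : Type*} [Fintype n] [DecidableEq n]

lemma isCompl_ker_range_one_sub_vecMulLinear [Field F] {X : Matrix n n F}
    (hX : ¬ (Polynomial.X - Polynomial.C 1) ^ 2 ∣ minpoly F X) :
    IsCompl (LinearMap.ker (1 - X.vecMulLinear)) (LinearMap.range (1 - X.vecMulLinear)) := by
  obtain ⟨B, hB⟩ : ∃ B, (X - 1) ^ 2 * B = X - 1 := by
    simpa using exists_aeval_sq_mul_eq (Polynomial.irreducible_X_sub_C (1 : F)) hX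
  have one_sub_apply (v : n → F) : (1 - X.vecMulLinear) v = -(v ᵥ* (X - 1)) := by
    simp [vecMul_sub]
  refine isCompl_ker_range_of_apply_apply fun v hv ↦ ?_
  have hv : v ᵥ* (X - 1) ^ 2 = 0 := by
    rwa [one_sub_apply, one_sub_apply, neg_vecMul, neg_neg, vecMul_vecMul, ← sq] at hv
  rw [one_sub_apply, ← hB, ← vecMul_vecMul, hv, zero_vecMul, neg_zero]

lemma eq_inv_mul_mul_iff_forall_vecMul [CommRing F] {X Y P : Matrix n n F} (hP : IsUnit P) :
    Y = P⁻¹ * X * P ↔ ∀ v, v ᵥ* X ᵥ* P = v ᵥ* P ᵥ* Y := by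
  have hdet := P.isUnit_iff_isUnit_det.1 hP
  simp only [vecMul_vecMul, mul_assoc]
  constructor
  · rintro rfl v
    rw [mul_nonsing_inv_cancel_left _ _ hdet]
  · intro h
    rw [ext_of_single_vecMul fun i ↦ h (Pi.single i 1), nonsing_inv_mul_cancel_left _ _ hdet]

lemma exists_linearEquiv_eq_vecMul [CommRing F] {P : Matrix n n F} (hP : IsUnit P) :
    ∃ e : (n → F) ≃ₗ[F] (n → F), ∀ v, e v = v ᵥ* P := by
  have hdet := P.isUnit_iff_isUnit_det.1 hP
  exact ⟨toLinearEquivRight'OfInv (nonsing_inv_mul P hdet) (mul_nonsing_inv P hdet),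
    fun _ ↦ rfl⟩

lemma exists_isUnit_vecMul_eq [CommRing F] (e : (n → F) ≃ₗ[F] (n → F)) :
    ∃ M : Matrix n n F, IsUnit M ∧ ∀ v, v ᵥ* M = e v := by
  refine ⟨(LinearMap.toMatrix' e.toLinearMap)ᵀ, ?_, fun v ↦ ?_⟩
  · rw [isUnit_transpose, LinearMap.isUnit_toMatrix'_iff, Module.End.isUnit_iff]
    exact e.bijective
  · rw [vecMul_transpose, LinearMap.toMatrix'_mulVec, LinearEquiv.coe_coe]

end Matrices

theorem semisimple_orthogonal_char_two_conjugacy_tfae_general {F n : Type*} [Field F] [CharP F 2]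
    [PerfectRing F 2] [Fintype n] [DecidableEq n] (Q : QuadraticForm F (n → F))
    (hQ : Q.polarBilin.SeparatingLeft) {X Y : Matrix n n F} (hX : ∀ v, Q (v ᵥ* X) = Q v)
    (hY : ∀ v, Q (v ᵥ* Y) = Q v) (hX1 : ¬ (Polynomial.X - Polynomial.C 1) ^ 2 ∣ minpoly F X) :
    List.TFAE [
      ∃ g, IsUnit g ∧ (∀ v, Q (v ᵥ* g) = Q v) ∧ Y = g⁻¹ * X * g,
      ∃ h, IsUnit h ∧ (∀ u v, QuadraticMap.polar Q (u ᵥ* h) (v ᵥ* h) = QuadraticMap.polar Q u v) ∧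
        Y = h⁻¹ * X * h,
      ∃ P, IsUnit P ∧ Y = P⁻¹ * X * P] := by
  tfae_have 1 → 2 := fun ⟨g, hg, hgQ, hXY⟩ ↦
    ⟨g, hg, polar_map_map (φ := g.vecMulLinear) hgQ, hXY⟩
  tfae_have 2 → 3 := fun ⟨h, hh, _, hXY⟩ ↦ ⟨h, hh, hXY⟩
  tfae_have 3 → 1 := by
    rintro ⟨P, hP, hXY⟩
    obtain ⟨e, he⟩ := exists_linearEquiv_eq_vecMul hP
    obtain ⟨φ, hφ⟩ := exists_isometryEquiv_conj_of_similar (T := X.vecMulLinear)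
      (T' := Y.vecMulLinear) hQ hX hY (isCompl_ker_range_one_sub_vecMulLinear hX1) e fun v ↦ by
        simpa [he] using (eq_inv_mul_mul_iff_forall_vecMul hP).1 hXY v
    obtain ⟨g, hg, hgφ⟩ := exists_isUnit_vecMul_eq φ.toLinearEquiv
    refine ⟨g, hg, fun v ↦ ?_, (eq_inv_mul_mul_iff_forall_vecMul hg).2 fun v ↦ ?_⟩
    · rw [hgφ]
      exact φ.map_app v
    · rw [hgφ, hgφ]
      exact hφ v
  tfae_finish

/-- In characteristic 2, for semisimple isometries `X`, `Y` of a nonsingular quadratic form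
`Q` the following are equivalent: conjugacy in the orthogonal group of `Q`, conjugacy in
the symplectic group of the polar form `β_Q`, and similarity in `GL(n,F)`. -/
theorem semisimple_orthogonal_char_two_conjugacy_tfae
    {F : Type*} [Field F] [Fintype F] [CharP F 2] {n : ℕ}
    (Q : (Fin n → F) → F)
    (hQsmul : ∀ (a : F) (v : Fin n → F), Q (a • v) = a ^ 2 * Q v)
    (hpolar_addl : ∀ u₁ u₂ v, QuadraticMap.polar Q (u₁ + u₂) v =
        QuadraticMap.polar Q u₁ v + QuadraticMap.polar Q u₂ v)
    (hpolar_smull : ∀ (a : F) (u v : Fin n → F),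
        QuadraticMap.polar Q (a • u) v = a * QuadraticMap.polar Q u v)
    (hpolar_addr : ∀ u v₁ v₂, QuadraticMap.polar Q u (v₁ + v₂) =
        QuadraticMap.polar Q u v₁ + QuadraticMap.polar Q u v₂)
    (hpolar_smulr : ∀ (a : F) (u v : Fin n → F),
        QuadraticMap.polar Q u (a • v) = a * QuadraticMap.polar Q u v)
    (hnd : ∀ v, (∀ u, QuadraticMap.polar Q v u = 0) → v = 0)
    (X Y : Matrix (Fin n) (Fin n) F) (hX : IsUnit X) (hY : IsUnit Y)
    (hXiso : ∀ v, Q (v ᵥ* X) = Q v) (hYiso : ∀ v, Q (v ᵥ* Y) = Q v)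
    (hssX : Squarefree (minpoly F X)) (hssY : Squarefree (minpoly F Y)) :
    ((∃ g : Matrix (Fin n) (Fin n) F, IsUnit g ∧ (∀ v, Q (v ᵥ* g) = Q v) ∧
        Y = g⁻¹ * X * g) ↔
      (∃ P : Matrix (Fin n) (Fin n) F, IsUnit P ∧ Y = P⁻¹ * X * P)) ∧
    ((∃ h : Matrix (Fin n) (Fin n) F, IsUnit h ∧
        (∀ u v, QuadraticMap.polar Q (u ᵥ* h) (v ᵥ* h) = QuadraticMap.polar Q u v) ∧
        Y = h⁻¹ * X * h) ↔
      (∃ P : Matrix (Fin n) (Fin n) F, IsUnit P ∧ Y = P⁻¹ * X * P)) := by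
  have tfae := semisimple_orthogonal_char_two_conjugacy_tfae_general
    (QuadraticMap.ofPolar Q (fun a v ↦ by rw [hQsmul, sq, smul_eq_mul]) hpolar_addl hpolar_smull)
    hnd hXiso hYiso fun h ↦ (Polynomial.irreducible_X_sub_C (1 : F)).not_isUnit <| hssX _ <| by
      rwa [← sq]
  exact ⟨tfae.out 0 2, tfae.out 1 2⟩
end
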